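/- arXiv:1208.0509 — 3 statements merged into one kernel-verified Lean document; each statement's English description precedes it below -/
import Mathlib

section
/- Let d ≥ 1, let p ∈ ℝ^d, and let k ≥ d+2. Let X be a set of k(d+1) points in ℝ^d partitioned into d+1 color classes C_0, C_1, …, C_d of exactly k points each, with X ∪ {p} in general position. Then the number cBP_k(X) of unordered colored Birch partitions of X to p is even. -/
open scoped Classical

/-- A set of points in `ℝ^d` is in *general position* if for every `j < d`,
no `j + 2` of the points lie on a common `j`-dimensional affine subspace. -/
def GenPos (d : ℕ) (P : Set (Fin d → ℝ)) : Prop :=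
  ∀ j < d, ∀ S : Finset (Fin d → ℝ), ↑S ⊆ P → S.card = j + 2 →
    ¬ ∃ A : AffineSubspace ℝ (Fin d → ℝ),
        Module.finrank ℝ A.direction = j ∧ (S : Set (Fin d → ℝ)) ⊆ (A : Set (Fin d → ℝ))

/-- `cBP d k p X C` is the number of unordered colored Birch partitions of the point set `X`
(with color classes `C 0, …, C d`) to the point `p`: partitions of `X` into `k` blocks, each
of exactly `d + 1` points, each containing every color exactly once, and each containing `p`
in its convex hull. -/
noncomputable def cBP (d k : ℕ) (p : Fin d → ℝ) (X : Finset (Fin d → ℝ))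
    (C : Fin (d + 1) → Finset (Fin d → ℝ)) : ℕ :=
  Set.ncard { P : Finset (Finset (Fin d → ℝ)) |
    P.card = k ∧
    (∀ B ∈ P, ∀ B' ∈ P, B ≠ B' → Disjoint B B') ∧
    P.biUnion id = X ∧
    ∀ B ∈ P, B.card = d + 1 ∧ (∀ i : Fin (d + 1), (B ∩ C i).card = 1) ∧
      p ∈ convexHull ℝ (B : Set (Fin d → ℝ)) }

section helpers

variable {d : ℕ}

lemma span_of_genPos (hd : 1 ≤ d) (p : Fin d → ℝ) (X : Finset (Fin d → ℝ)) (hpX : p ∉ X)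
    (hgen : GenPos d (↑X ∪ {p})) (S : Finset (Fin d → ℝ)) (hS : S ⊆ X) (hc : S.card = d) :
    Submodule.span ℝ ((fun y => y - p) '' (S : Set (Fin d → ℝ))) = ⊤ := by
  by_contra hne
  obtain ⟨f, hf0, hf⟩ := Submodule.exists_le_ker_of_lt_top _ (lt_top_iff_ne_top.2 hne)
  have hr := Module.Dual.finrank_ker_add_one_of_ne_zero (f := f) hf0
  rw [Module.finrank_fin_fun] at hr
  refine hgen (d - 1) (by omega) (insert p S) ?_ ?_
    ⟨AffineSubspace.mk' p (LinearMap.ker f), ?_, ?_⟩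
  · intro y hy
    simp only [Finset.coe_insert, Set.mem_insert_iff, Finset.mem_coe] at hy
    rcases hy with rfl | hy
    · simp
    · left; exact hS hy
  · rw [Finset.card_insert_of_notMem (fun h => hpX (hS h)), hc]; omega
  · rw [AffineSubspace.direction_mk']
    omega
  · intro y hy
    simp only [Finset.coe_insert, Set.mem_insert_iff, Finset.mem_coe] at hy
    rcases hy with rfl | hy
    · exact AffineSubspace.self_mem_mk' _ _
    · show y ∈ AffineSubspace.mk' p (LinearMap.ker f)
      rw [AffineSubspace.mem_mk']
      exact hf (Submodule.subset_span ⟨y, hy, rfl⟩)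

lemma exists_of_genPos (hd : 1 ≤ d) (p : Fin d → ℝ) (X : Finset (Fin d → ℝ)) (hpX : p ∉ X)
    (hgen : GenPos d (↑X ∪ {p})) (S : Finset (Fin d → ℝ)) (hS : S ⊆ X) (hc : S.card = d)
    (z : Fin d → ℝ) : ∃ w : (Fin d → ℝ) → ℝ, ∑ y ∈ S, w y • (y - p) = z := by
  have h : z ∈ Submodule.span ℝ ((fun y => y - p) '' (S : Set (Fin d → ℝ))) := by
    rw [span_of_genPos hd p X hpX hgen S hS hc]; trivial
  rw [Submodule.mem_span_image_finset_iff_exists_fun] at h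
  obtain ⟨c, hc'⟩ := h
  refine ⟨fun y => if h : y ∈ S then c ⟨y, h⟩ else 0, ?_⟩
  rw [← hc', ← Finset.sum_coe_sort S]
  refine Finset.sum_congr rfl fun y _ => ?_
  simp

lemma indep_of_genPos (hd : 1 ≤ d) (p : Fin d → ℝ) (X : Finset (Fin d → ℝ)) (hpX : p ∉ X)
    (hgen : GenPos d (↑X ∪ {p})) (S : Finset (Fin d → ℝ)) (hS : S ⊆ X) (hc : S.card = d)
    (w : (Fin d → ℝ) → ℝ) (hw : ∑ y ∈ S, w y • (y - p) = 0) : ∀ y ∈ S, w y = 0 := by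
  have h := span_of_genPos hd p X hpX hgen S hS hc
  have hli : LinearIndependent ℝ (fun y : S => (y : Fin d → ℝ) - p) := by
    apply linearIndependent_of_top_le_span_of_card_eq_finrank
    · rw [← h]
      apply Submodule.span_mono
      rintro _ ⟨y, hy, rfl⟩
      exact ⟨⟨y, hy⟩, rfl⟩
    · simp [hc]
  rw [Fintype.linearIndependent_iff] at hli
  intro y hy
  refine hli (fun y => w y) ?_ ⟨y, hy⟩
  rw [← hw]
  exact Finset.sum_coe_sort S (fun y => w y • (y - p))

/-- weights on `T` vanishing exactly at `a`, positive elsewhere -/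
def GoodAt (p : Fin d → ℝ) (T : Finset (Fin d → ℝ)) (a : Fin d → ℝ) : Prop :=
  ∃ w : (Fin d → ℝ) → ℝ, w a = 0 ∧ (∀ y ∈ T, y ≠ a → 0 < w y) ∧ ∑ y ∈ T, w y • (y - p) = 0

lemma sum_erase_two (T : Finset (Fin d → ℝ)) (p a b : Fin d → ℝ) (w : (Fin d → ℝ) → ℝ)
    (ha : w a = 0) (hb : w b = 0) :
    ∑ y ∈ (T.erase a).erase b, w y • (y - p) = ∑ y ∈ T, w y • (y - p) := by
  rw [Finset.sum_erase _ (by simp [hb]), Finset.sum_erase _ (by simp [ha])]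

lemma two_zero (hd : 1 ≤ d) (p : Fin d → ℝ) (X : Finset (Fin d → ℝ)) (hpX : p ∉ X)
    (hgen : GenPos d (↑X ∪ {p})) (T : Finset (Fin d → ℝ)) (hT : T ⊆ X) (hc : T.card = d + 2)
    (w : (Fin d → ℝ) → ℝ) (hw : ∑ y ∈ T, w y • (y - p) = 0) (a b : Fin d → ℝ) (ha : a ∈ T)
    (hb : b ∈ T) (hab : a ≠ b) (hwa : w a = 0) (hwb : w b = 0) : ∀ y ∈ T, w y = 0 := by
  intro y hy
  by_cases h1 : y = a
  · rw [h1, hwa]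
  by_cases h2 : y = b
  · rw [h2, hwb]
  refine indep_of_genPos hd p X hpX hgen ((T.erase a).erase b) ?_ ?_ w ?_ y ?_
  · exact ((Finset.erase_subset _ _).trans (Finset.erase_subset _ _)).trans hT
  · rw [Finset.card_erase_of_mem (by simp [hb, hab.symm]), Finset.card_erase_of_mem ha, hc]; rfl
  · rw [sum_erase_two _ _ _ _ _ hwa hwb, hw]
  · simp [h1, h2, hy]

lemma mem_hull_iff (hd : 1 ≤ d) (p : Fin d → ℝ) (X : Finset (Fin d → ℝ)) (hpX : p ∉ X)
    (hgen : GenPos d (↑X ∪ {p})) (T : Finset (Fin d → ℝ)) (hT : T ⊆ X) (hc : T.card = d + 2)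
    (a : Fin d → ℝ) (ha : a ∈ T) :
    p ∈ convexHull ℝ ((T.erase a : Finset (Fin d → ℝ)) : Set (Fin d → ℝ)) ↔ GoodAt p T a := by
  rw [Finset.mem_convexHull']
  constructor
  · rintro ⟨w, hw0, hw1, hwp⟩
    set w' : (Fin d → ℝ) → ℝ := fun y => if y = a then 0 else w y with hw'
    have hcong : ∀ y ∈ T.erase a, w' y = w y := by
      intro y hy
      simp [hw', Finset.ne_of_mem_erase hy]
    have hsum : ∑ y ∈ T, w' y • (y - p) = 0 := by
      rw [← Finset.sum_erase T (a := a) (by simp [hw']),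
        Finset.sum_congr rfl (fun y hy => by rw [hcong y hy])]
      simp_rw [smul_sub]
      rw [Finset.sum_sub_distrib, hwp, ← Finset.sum_smul, hw1, one_smul, sub_self]
    refine ⟨w', by simp [hw'], ?_, hsum⟩
    intro y hy hya
    have h0 : 0 ≤ w' y := by simpa [hw', hya] using hw0 y (by simp [hy, hya])
    refine lt_of_le_of_ne h0 ?_
    intro h
    have hz := two_zero hd p X hpX hgen T hT hc w' hsum a y ha hy (Ne.symm hya) (by simp [hw']) h.symm
    have : ∑ y ∈ T.erase a, w y = 0 := by
      apply Finset.sum_eq_zero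
      intro x hx
      rw [← hcong x hx]
      exact hz x (Finset.mem_of_mem_erase hx)
    rw [this] at hw1
    exact zero_ne_one hw1
  · rintro ⟨w, hwa, hpos, hsum⟩
    have hpos' : ∀ y ∈ T.erase a, 0 < w y := fun y hy =>
      hpos y (Finset.mem_of_mem_erase hy) (Finset.ne_of_mem_erase hy)
    rw [← Finset.sum_erase T (a := a) (by simp [hwa])] at hsum
    have hne : (T.erase a).Nonempty := by
      rw [← Finset.card_pos, Finset.card_erase_of_mem ha, hc]; omega
    have hW : 0 < ∑ y ∈ T.erase a, w y := Finset.sum_pos hpos' hne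
    simp_rw [smul_sub] at hsum
    rw [Finset.sum_sub_distrib, ← Finset.sum_smul, sub_eq_zero] at hsum
    refine ⟨fun y => (∑ y ∈ T.erase a, w y)⁻¹ * w y, ?_, ?_, ?_⟩
    · intro y hy
      exact mul_nonneg (inv_nonneg.2 hW.le) (hpos' y hy).le
    · rw [← Finset.mul_sum, inv_mul_cancel₀ hW.ne']
    · simp_rw [mul_smul]
      rw [← Finset.smul_sum, hsum, smul_smul, inv_mul_cancel₀ hW.ne', one_smul]

lemma goodAt_exists (hd : 1 ≤ d) (p : Fin d → ℝ) (X : Finset (Fin d → ℝ)) (hpX : p ∉ X)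
    (hgen : GenPos d (↑X ∪ {p})) (T : Finset (Fin d → ℝ)) (hT : T ⊆ X) (hc : T.card = d + 2)
    (a : Fin d → ℝ) (ha : a ∈ T) (hg : GoodAt p T a) : ∃ b ∈ T, b ≠ a ∧ GoodAt p T b := by
  obtain ⟨l, hla, hpos, hsum⟩ := hg
  have hne : (T.erase a).Nonempty := by
    rw [← Finset.card_pos, Finset.card_erase_of_mem ha, hc]; omega
  obtain ⟨c, hcT⟩ := hne
  obtain ⟨m0, hm0⟩ := exists_of_genPos hd p X hpX hgen ((T.erase a).erase c)
    (((Finset.erase_subset _ _).trans (Finset.erase_subset _ _)).trans hT)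
    (by rw [Finset.card_erase_of_mem hcT, Finset.card_erase_of_mem ha, hc]; rfl) (-(a - p))
  set m : (Fin d → ℝ) → ℝ := fun y => if y = a then 1 else if y = c then 0 else m0 y with hm
  have hca : c ≠ a := Finset.ne_of_mem_erase hcT
  have hma : m a = 1 := by simp [hm]
  have hmsum : ∑ y ∈ T, m y • (y - p) = 0 := by
    rw [← Finset.add_sum_erase T _ ha, ← Finset.add_sum_erase _ _ hcT]
    have : ∑ y ∈ (T.erase a).erase c, m y • (y - p) = -(a - p) := by
      rw [← hm0]
      refine Finset.sum_congr rfl fun y hy => ?_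
      simp only [Finset.mem_erase] at hy
      simp [hm, hy.1, hy.2.1]
    rw [this, hma]
    simp [hm, hca]
  obtain ⟨b, hb, hbmax⟩ := Finset.exists_max_image (T.erase a) (fun y => - m y / l y) ⟨c, hcT⟩
  have hbT := Finset.mem_of_mem_erase hb
  have hba := Finset.ne_of_mem_erase hb
  have hlb := hpos b hbT hba
  set r := - m b / l b with hr
  have hnsum : ∑ y ∈ T, (r * l y + m y) • (y - p) = 0 := by
    simp_rw [add_smul, mul_smul]
    rw [Finset.sum_add_distrib, ← Finset.smul_sum, hsum, hmsum]
    simp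
  have hnb : r * l b + m b = 0 := by
    rw [hr]; field_simp; ring
  refine ⟨b, hbT, hba, fun y => r * l y + m y, hnb, ?_, hnsum⟩
  intro y hy hyb
  show 0 < r * l y + m y
  by_cases hya : y = a
  · rw [hya, hla, hma]; norm_num
  have hly := hpos y hy hya
  have h1 : - m y / l y ≤ r := hbmax y (by simp [hy, hya])
  rw [div_le_iff₀ hly] at h1
  refine lt_of_le_of_ne (by linarith) ?_
  intro h
  have := two_zero hd p X hpX hgen T hT hc (fun y => r * l y + m y) hnsum y b hy hbT hyb h.symm hnb a ha
  simp [hla, hma] at this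

lemma goodAt_unique_aux (hd : 1 ≤ d) (p : Fin d → ℝ) (X : Finset (Fin d → ℝ)) (hpX : p ∉ X)
    (hgen : GenPos d (↑X ∪ {p})) (T : Finset (Fin d → ℝ)) (hT : T ⊆ X) (hc : T.card = d + 2)
    (a b c : Fin d → ℝ) (ha : a ∈ T) (hb : b ∈ T) (hcT : c ∈ T) (hba : b ≠ a) (hca : c ≠ a)
    (hbc : b ≠ c)
    (hga : GoodAt p T a) (hgb : GoodAt p T b) (hgc : GoodAt p T c) : False := by
  obtain ⟨l, hl0, hlpos, hl⟩ := hga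
  obtain ⟨u, hu0, hupos, hu⟩ := hgb
  obtain ⟨v, hv0, hvpos, hv⟩ := hgc
  have hua := hupos a ha hba.symm
  have hva := hvpos a ha hca.symm
  have hlb := hlpos b hb hba
  have hlc := hlpos c hcT hca
  have hvb := hvpos b hb hbc
  have huc := hupos c hcT hbc.symm
  -- s * u - t * v + q * l vanishes at a and b
  set q := u a * v b / l b with hq
  have hqpos : 0 < q := by positivity
  have hz : ∑ y ∈ T, (v a * u y - u a * v y + q * l y) • (y - p) = 0 := by
    simp_rw [add_smul, sub_smul, mul_smul]
    rw [Finset.sum_add_distrib, Finset.sum_sub_distrib, ← Finset.smul_sum, ← Finset.smul_sum,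
      ← Finset.smul_sum, hl, hu, hv]
    simp
  have := two_zero hd p X hpX hgen T hT hc (fun y => v a * u y - u a * v y + q * l y) hz a b ha hb
    hba.symm (by simp only [hl0]; ring) (by simp only [hu0, hq]; field_simp; ring) c hcT
  simp only [hv0] at this
  have h1 : 0 < v a * u c := by positivity
  have h2 : 0 < q * l c := by positivity
  linarith

lemma even_good (hd : 1 ≤ d) (p : Fin d → ℝ) (X : Finset (Fin d → ℝ)) (hpX : p ∉ X)
    (hgen : GenPos d (↑X ∪ {p})) (T : Finset (Fin d → ℝ)) (hT : T ⊆ X) (hc : T.card = d + 2) :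
    Even (T.filter (fun a =>
      p ∈ convexHull ℝ ((T.erase a : Finset (Fin d → ℝ)) : Set (Fin d → ℝ)))).card := by
  rw [Finset.filter_congr (fun a ha => mem_hull_iff hd p X hpX hgen T hT hc a ha)]
  rcases (T.filter (fun a => GoodAt p T a)).eq_empty_or_nonempty with h | ⟨a, ha⟩
  · rw [h]; simp
  rw [Finset.mem_filter] at ha
  obtain ⟨b, hb, hba, hgb⟩ := goodAt_exists hd p X hpX hgen T hT hc a ha.1 ha.2
  have : T.filter (fun a => GoodAt p T a) = {a, b} := by
    ext c
    simp only [Finset.mem_filter, Finset.mem_insert, Finset.mem_singleton]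
    constructor
    · rintro ⟨hcT, hgc⟩
      by_contra hcon
      push Not at hcon
      exact goodAt_unique_aux hd p X hpX hgen T hT hc a b c ha.1 hb hcT hba hcon.1
        (Ne.symm hcon.2) ha.2 hgb hgc
    · rintro (rfl | rfl)
      · exact ha
      · exact ⟨hb, hgb⟩
  rw [this, Finset.card_pair hba.symm]
  exact even_two

end helpers

section comb

/-- the rainbow block with indices `a` -/
noncomputable def blk {d k : ℕ} (x : Fin (d + 1) → Fin k → (Fin d → ℝ)) (a : Fin (d + 1) → Fin k) :
    Finset (Fin d → ℝ) := Finset.univ.image (fun i => x i (a i))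

/-- the block with color `i` replaced by `q` -/
noncomputable def blkq {d k : ℕ} (x : Fin (d + 1) → Fin k → (Fin d → ℝ)) (q : Fin d → ℝ)
    (i : Fin (d + 1)) (a : Fin (d + 1) → Fin k) :
    Finset (Fin d → ℝ) := insert q ((Finset.univ.erase i).image (fun m => x m (a m)))

noncomputable def Gq {d k : ℕ} (p : Fin d → ℝ) (x : Fin (d + 1) → Fin k → (Fin d → ℝ))
    (q : Fin d → ℝ) (i : Fin (d + 1)) (a : Fin (d + 1) → Fin k) : ZMod 2 :=
  if (blkq x q i a).card = d + 1 ∧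
    p ∈ convexHull ℝ (blkq x q i a : Set (Fin d → ℝ)) then 1 else 0

noncomputable def Fq {d k : ℕ} (p : Fin d → ℝ) (x : Fin (d + 1) → Fin k → (Fin d → ℝ))
    (a : Fin (d + 1) → Fin k) : ZMod 2 :=
  if p ∈ convexHull ℝ (blk x a : Set (Fin d → ℝ)) then 1 else 0

variable {d k : ℕ}

lemma Gq_congr (p : Fin d → ℝ) (x : Fin (d + 1) → Fin k → (Fin d → ℝ))
    (q : Fin d → ℝ) (i : Fin (d + 1)) (a a' : Fin (d + 1) → Fin k)
    (h : ∀ m, m ≠ i → a m = a' m) : Gq p x q i a = Gq p x q i a' := by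
  have : blkq x q i a = blkq x q i a' := by
    unfold blkq
    congr 1
    refine Finset.image_congr fun m hm => ?_
    have hm' : m ≠ i := by simpa using hm
    simp only [h m hm']
  unfold Gq
  rw [this]

lemma blk_card (x : Fin (d + 1) → Fin k → (Fin d → ℝ))
    (hx : ∀ i j i' j', x i j = x i' j' → i = i' ∧ j = j') (a : Fin (d + 1) → Fin k) :
    (blk x a).card = d + 1 := by
  unfold blk
  rw [Finset.card_image_of_injective _ (fun i i' h => (hx _ _ _ _ h).1)]
  simp

lemma Fq_eq (hd : 1 ≤ d) (p : Fin d → ℝ) (X : Finset (Fin d → ℝ)) (hpX : p ∉ X)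
    (hgen : GenPos d (↑X ∪ {p})) (x : Fin (d + 1) → Fin k → (Fin d → ℝ))
    (hx : ∀ i j i' j', x i j = x i' j' → i = i' ∧ j = j') (hxX : ∀ i j, x i j ∈ X)
    (q : Fin d → ℝ) (hq : q ∈ X) (a : Fin (d + 1) → Fin k) :
    Fq p x a = ∑ i, Gq p x q i a := by
  have hinj : Function.Injective (fun i => x i (a i)) := fun i i' h => (hx _ _ _ _ h).1
  have hbX : blk x a ⊆ X := by
    intro y hy
    simp only [blk, Finset.mem_image] at hy
    obtain ⟨i, -, rfl⟩ := hy
    exact hxX _ _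
  have hbc := blk_card x hx a
  have her : ∀ i, (Finset.univ.erase i).image (fun m => x m (a m)) = (blk x a).erase (x i (a i)) := by
    intro i
    rw [Finset.image_erase hinj]
    rfl
  have hmem : ∀ i, x i (a i) ∈ blk x a := fun i => Finset.mem_image_of_mem _ (Finset.mem_univ i)
  by_cases hqb : q ∈ blk x a
  · obtain ⟨m, -, hm⟩ := Finset.mem_image.1 hqb
    rw [Finset.sum_eq_single m]
    · have : blkq x q m a = blk x a := by
        unfold blkq
        rw [her, ← hm, Finset.insert_erase (hmem m)]
      unfold Gq Fq
      rw [this]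
      simp [hbc]
    · intro i _ him
      unfold Gq
      rw [if_neg]
      rintro ⟨h, -⟩
      unfold blkq at h
      rw [her, Finset.insert_eq_of_mem, Finset.card_erase_of_mem (hmem i), hbc] at h
      · omega
      · rw [Finset.mem_erase, ← hm]
        exact ⟨fun h => him (hinj h).symm, hmem m⟩
    · simp
  · set T := insert q (blk x a) with hT
    have hTc : T.card = d + 2 := by rw [hT, Finset.card_insert_of_notMem hqb, hbc]
    have hev := even_good hd p X hpX hgen T (Finset.insert_subset hq hbX) hTc
    have h0 : ((T.filter (fun a =>
      p ∈ convexHull ℝ ((T.erase a : Finset (Fin d → ℝ)) : Set (Fin d → ℝ)))).card : ZMod 2) = 0 :=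
      (ZMod.natCast_eq_zero_iff_even).2 hev
    rw [Finset.natCast_card_filter, hT, Finset.sum_insert hqb, Finset.erase_insert hqb] at h0
    have h1 : ∑ y ∈ blk x a, (if p ∈ convexHull ℝ
        (((insert q (blk x a)).erase y : Finset (Fin d → ℝ)) : Set (Fin d → ℝ)) then (1 : ZMod 2) else 0)
        = ∑ i, Gq p x q i a := by
      conv_lhs => rw [blk]
      rw [Finset.sum_image (fun i _ i' _ h => hinj h)]
      refine Finset.sum_congr rfl fun i _ => ?_
      have hne : q ≠ x i (a i) := fun h => hqb (h ▸ hmem i)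
      have hb : (insert q (blk x a)).erase (x i (a i)) = blkq x q i a := by
        unfold blkq
        rw [her, Finset.erase_insert_of_ne hne]
      have hcd : (blkq x q i a).card = d + 1 := by
        rw [← hb, Finset.card_erase_of_mem (Finset.mem_insert_of_mem (hmem i)), ← hT, hTc]; rfl
      unfold Gq
      rw [← hb] at hcd ⊢
      change (if p ∈ convexHull ℝ (((insert q (blk x a)).erase (x i (a i)) : Finset (Fin d → ℝ)) :
        Set (Fin d → ℝ)) then (1 : ZMod 2) else 0) = _
      simp only [hcd, true_and]
    rw [h1] at h0
    exact CharTwo.add_eq_zero.1 h0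

/-- the involution: swap color `c` between rows `j` and `j'` (normalising color 0). -/
noncomputable def invo (c : Fin (d + 1)) (j j' : Fin k) (s : Fin (d + 1) → Equiv.Perm (Fin k)) :
    Fin (d + 1) → Equiv.Perm (Fin k) :=
  fun m => if (c ≠ 0 ∧ m = c) ∨ (c = 0 ∧ m ≠ 0) then s m * Equiv.swap j j' else s m

lemma sum_zero (hd : 1 ≤ d) (G : Fin (d + 1) → (Fin (d + 1) → Fin k) → ZMod 2)
    (hG : ∀ i a a', (∀ m, m ≠ i → a m = a' m) → G i a = G i a')
    (col : Fin k → Fin (d + 1)) (j j' : Fin k) (hjj : j ≠ j') (hcol : col j = col j') :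
    ∑ s ∈ (Finset.univ : Finset (Fin (d + 1) → Equiv.Perm (Fin k))).filter (fun s => s 0 = 1),
      ∏ t, G (col t) (fun i => s i t) = 0 := by
  have hswap : Equiv.swap j j' ≠ 1 := by
    intro h
    exact hjj (Equiv.swap_eq_one_iff.1 h)
  refine Finset.sum_involution (fun s _ => invo (col j) j j' s) ?_ ?_ ?_ ?_
  · intro s hs
    suffices h : ∏ t, G (col t) (fun i => s i t)
        = ∏ t, G (col t) (fun i => invo (col j) j j' s i t) by
      rw [← h]; exact CharTwo.add_self_eq_zero _
    by_cases hc : col j = 0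
    · -- rows are permuted by the swap up to color 0
      rw [← Equiv.prod_comp (Equiv.swap j j') (fun t => G (col t) (fun i => s i t))]
      refine Finset.prod_congr rfl fun t _ => ?_
      have hcs : col (Equiv.swap j j' t) = col t := by
        rcases eq_or_ne t j with rfl | h1
        · rw [Equiv.swap_apply_left, hcol]
        rcases eq_or_ne t j' with rfl | h2
        · rw [Equiv.swap_apply_right, hcol]
        rw [Equiv.swap_apply_of_ne_of_ne h1 h2]
      rw [hcs]
      by_cases ht : t = j ∨ t = j'
      · have hct : col t = 0 := by
          rcases ht with rfl | rfl
          · exact hc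
          · rw [← hcol, hc]
        apply hG
        intro m hm
        rw [hct] at hm
        simp [invo, hc, hm]
      · push Not at ht
        congr 1
        funext m
        by_cases hm : m = 0
        · simp [invo, hc, hm, Equiv.swap_apply_of_ne_of_ne ht.1 ht.2]
        · simp [invo, hc, hm]
    · refine Finset.prod_congr rfl fun t _ => ?_
      by_cases ht : t = j ∨ t = j'
      · have hct : col t = col j := by
          rcases ht with rfl | rfl
          · rfl
          · exact hcol.symm
        apply hG
        intro m hm
        rw [hct] at hm
        simp [invo, hc, hm]
      · push Not at ht
        congr 1
        funext m
        by_cases hm : m = col j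
        · simp [invo, hc, hm, Equiv.swap_apply_of_ne_of_ne ht.1 ht.2]
        · simp [invo, hc, hm]
  · intro s hs _ h
    by_cases hc : col j = 0
    · have h1 := congrFun h (Fin.last d)
      have hl : Fin.last d ≠ 0 := by
        intro h; have := congrArg Fin.val h; simp at this; omega
      simp [invo, hc, hl] at h1
      exact hjj h1
    · have h1 := congrFun h (col j)
      simp [invo, hc] at h1
      exact hjj h1
  · intro s hs
    simp only [Finset.mem_filter, Finset.mem_univ, true_and] at hs ⊢
    by_cases hc : col j = 0
    · simp [invo, hc, hs]
    · simp [invo, hc, hs, Ne.symm hc]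
  · intro s hs
    funext m
    unfold invo
    split_ifs <;> simp [mul_assoc]

lemma total_even (hd : 1 ≤ d) (hk : d + 2 ≤ k) (p : Fin d → ℝ) (X : Finset (Fin d → ℝ)) (hpX : p ∉ X)
    (hgen : GenPos d (↑X ∪ {p})) (x : Fin (d + 1) → Fin k → (Fin d → ℝ))
    (hx : ∀ i j i' j', x i j = x i' j' → i = i' ∧ j = j') (hxX : ∀ i j, x i j ∈ X) :
    Even ((Finset.univ : Finset (Fin (d + 1) → Equiv.Perm (Fin k))).filter (fun s => s 0 = 1 ∧
      ∀ t, p ∈ convexHull ℝ (blk x (fun i => s i t) : Set (Fin d → ℝ)))).card := by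
  rw [← ZMod.natCast_eq_zero_iff_even, ← Finset.filter_filter, Finset.natCast_card_filter]
  have hk0 : 0 < k := by omega
  set q := x 0 ⟨0, hk0⟩ with hq
  have h1 : ∀ s : Fin (d + 1) → Equiv.Perm (Fin k),
      (if ∀ t, p ∈ convexHull ℝ (blk x (fun i => s i t) : Set (Fin d → ℝ)) then (1 : ZMod 2) else 0)
      = ∑ col : Fin k → Fin (d + 1), ∏ t, Gq p x q (col t) (fun i => s i t) := by
    intro s
    have : (if ∀ t, p ∈ convexHull ℝ (blk x (fun i => s i t) : Set (Fin d → ℝ)) then (1 : ZMod 2)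
        else 0) = ∏ t, Fq p x (fun i => s i t) := by
      unfold Fq
      rw [Finset.prod_ite_zero]
      simp
    rw [this, Finset.prod_congr rfl (fun t _ => Fq_eq hd p X hpX hgen x hx hxX q (hxX _ _) _)]
    rw [Finset.prod_univ_sum, Fintype.piFinset_univ]
  rw [Finset.sum_congr rfl (fun s _ => h1 s), Finset.sum_comm]
  refine Finset.sum_eq_zero fun col _ => ?_
  obtain ⟨j, j', hjj, hcol⟩ := Fintype.exists_ne_map_eq_of_card_lt col (by simp; omega)
  exact sum_zero hd (Gq p x q) (Gq_congr p x q) col j j' hjj hcol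

end comb

/-- For `d ≥ 1` and `k ≥ d + 2`, if `X` is a set of `k(d+1)` points in `ℝ^d` partitioned
into `d + 1` color classes of exactly `k` points each, with `X ∪ {p}` in general position,
then the number of colored Birch partitions of `X` to `p` is even. -/
theorem cBP_even (d k : ℕ) (hd : 1 ≤ d) (hk : d + 2 ≤ k)
    (p : Fin d → ℝ) (X : Finset (Fin d → ℝ)) (C : Fin (d + 1) → Finset (Fin d → ℝ))
    (hXcard : X.card = k * (d + 1))
    (hccard : ∀ i : Fin (d + 1), (C i).card = k)
    (hcdisj : ∀ i j : Fin (d + 1), i ≠ j → Disjoint (C i) (C j))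
    (hX : X = Finset.univ.biUnion C)
    (hpX : p ∉ X)
    (hgen : GenPos d (↑X ∪ {p})) :
    Even (cBP d k p X C) := by
  let e : ∀ i, Fin k ≃ C i := fun i => ((C i).equivFinOfCardEq (hccard i)).symm
  set x : Fin (d + 1) → Fin k → (Fin d → ℝ) := fun i j => (e i j : Fin d → ℝ) with hxdef
  have hxC : ∀ i j, x i j ∈ C i := fun i j => (e i j).2
  have hxsurj : ∀ i, ∀ y ∈ C i, ∃ j, x i j = y := fun i y hy =>
    ⟨(e i).symm ⟨y, hy⟩, by simp [hxdef]⟩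
  have hcol : ∀ i i' y, y ∈ C i → y ∈ C i' → i = i' := by
    intro i i' y h h'
    by_contra hne
    exact Finset.disjoint_left.1 (hcdisj i i' hne) h h'
  have hx : ∀ i j i' j', x i j = x i' j' → i = i' ∧ j = j' := by
    intro i j i' j' h
    obtain rfl : i = i' := hcol i i' (x i j) (hxC i j) (h ▸ hxC i' j')
    exact ⟨rfl, (e i).injective (Subtype.ext h)⟩
  have hxX : ∀ i j, x i j ∈ X := by
    intro i j
    rw [hX]
    exact Finset.mem_biUnion.2 ⟨i, Finset.mem_univ _, hxC i j⟩
  have hXx : ∀ y ∈ X, ∃ i j, x i j = y := by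
    intro y hy
    rw [hX] at hy
    obtain ⟨i, -, hi⟩ := Finset.mem_biUnion.1 hy
    obtain ⟨j, hj⟩ := hxsurj i y hi
    exact ⟨i, j, hj⟩
  have hev := total_even hd hk p X hpX hgen x hx hxX
  have hmemb : ∀ (a : Fin (d + 1) → Fin k) i j, x i j ∈ blk x a ↔ a i = j := by
    intro a i j
    simp only [blk, Finset.mem_image, Finset.mem_univ, true_and]
    constructor
    · rintro ⟨m, hm⟩
      obtain ⟨rfl, h⟩ := hx _ _ _ _ hm
      exact h
    · rintro rfl
      exact ⟨i, rfl⟩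
  have hblkX : ∀ a y, y ∈ blk x a → ∃ i, x i (a i) = y := by
    intro a y hy
    simpa [blk] using hy
  set row : (Fin (d + 1) → Equiv.Perm (Fin k)) → Fin k → Finset (Fin d → ℝ) :=
    fun s t => blk x (fun i => s i t) with hrow
  have hrowdisj : ∀ s t t', t ≠ t' → Disjoint (row s t) (row s t') := by
    intro s t t' hne
    rw [Finset.disjoint_left]
    intro y hy hy'
    obtain ⟨i, rfl⟩ := hblkX _ _ hy
    have := (hmemb _ _ _).1 hy'
    exact hne ((s i).injective this).symm
  have hrowinj : ∀ s, Function.Injective (row s) := by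
    intro s t t' h
    by_contra hne
    have h1 := hrowdisj s t t' hne
    rw [← h, disjoint_self, Finset.bot_eq_empty] at h1
    have h2 := blk_card x hx (fun i => s i t)
    change (row s t).card = _ at h2
    rw [h1] at h2
    simp at h2
  set f : (Fin (d + 1) → Equiv.Perm (Fin k)) → Finset (Finset (Fin d → ℝ)) :=
    fun s => Finset.univ.image (row s) with hf
  set A := (Finset.univ : Finset (Fin (d + 1) → Equiv.Perm (Fin k))).filter (fun s => s 0 = 1 ∧
      ∀ t, p ∈ convexHull ℝ (blk x (fun i => s i t) : Set (Fin d → ℝ))) with hA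
  have hinj : Set.InjOn f (A : Set (Fin (d + 1) → Equiv.Perm (Fin k))) := by
    intro s hs s' hs' hss
    have hs0 : s 0 = 1 := (Finset.mem_filter.1 hs).2.1
    have hs0' : s' 0 = 1 := (Finset.mem_filter.1 hs').2.1
    funext i
    ext1 t
    have h1 : row s t ∈ f s' := by
      rw [← hss]
      exact Finset.mem_image_of_mem _ (Finset.mem_univ t)
    obtain ⟨t', -, ht'⟩ := Finset.mem_image.1 h1
    have h2 : x 0 t ∈ row s t := (hmemb _ _ _).2 (by simp [hs0])
    rw [← ht'] at h2
    have h3 := (hmemb _ _ _).1 h2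
    simp only [hs0', Equiv.Perm.coe_one, id_eq] at h3
    subst h3
    have h4 : x i (s i t') ∈ row s t' := (hmemb _ _ _).2 rfl
    rw [← ht'] at h4
    exact ((hmemb _ _ _).1 h4).symm
  have himage : { P : Finset (Finset (Fin d → ℝ)) |
    P.card = k ∧
    (∀ B ∈ P, ∀ B' ∈ P, B ≠ B' → Disjoint B B') ∧
    P.biUnion id = X ∧
    ∀ B ∈ P, B.card = d + 1 ∧ (∀ i : Fin (d + 1), (B ∩ C i).card = 1) ∧
      p ∈ convexHull ℝ (B : Set (Fin d → ℝ)) } = f '' (A : Set (Fin (d + 1) → Equiv.Perm (Fin k))) := by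
    ext P
    constructor
    · rintro ⟨hPc, hPd, hPu, hPB⟩
      have hB : ∀ t, ∃ B ∈ P, x 0 t ∈ B := by
        intro t
        have : x 0 t ∈ P.biUnion id := by rw [hPu]; exact hxX 0 t
        simpa using this
      choose B hBP hB0 using hB
      have hs : ∀ i t, ∃ j, x i j ∈ B t := by
        intro i t
        obtain ⟨y, hy⟩ := Finset.card_eq_one.1 ((hPB _ (hBP t)).2.1 i)
        have hy' : y ∈ B t ∩ C i := by rw [hy]; simp
        rw [Finset.mem_inter] at hy'
        obtain ⟨j, rfl⟩ := hxsurj i y hy'.2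
        exact ⟨j, hy'.1⟩
      choose g hg using hs
      have huniq : ∀ D ∈ P, ∀ i j j', x i j ∈ D → x i j' ∈ D → j = j' := by
        intro D hD i j j' h h'
        have hle := Finset.card_le_one.1 ((hPB _ hD).2.1 i).le (x i j)
          (Finset.mem_inter.2 ⟨h, hxC _ _⟩) (x i j') (Finset.mem_inter.2 ⟨h', hxC _ _⟩)
        exact (hx _ _ _ _ hle).2
      have hBeq : ∀ D ∈ P, ∀ D' ∈ P, ∀ y, y ∈ D → y ∈ D' → D = D' := by
        intro D hD D' hD' y h h'
        by_contra hne
        exact Finset.disjoint_left.1 (hPd D hD D' hD' hne) h h'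
      have hginj : ∀ i, Function.Injective (g i) := by
        intro i t t' h
        have h1 := hg i t
        rw [h] at h1
        have h2 := hBeq _ (hBP t) _ (hBP t') _ h1 (hg i t')
        refine huniq _ (hBP t) 0 t t' (hB0 t) ?_
        rw [h2]; exact hB0 t'
      have hg0 : ∀ t, g 0 t = t := fun t => huniq _ (hBP t) 0 _ _ (hg 0 t) (hB0 t)
      set s : Fin (d + 1) → Equiv.Perm (Fin k) := fun i =>
        Equiv.ofBijective (g i) (Finite.injective_iff_bijective.1 (hginj i)) with hsdef
      have hrowB : ∀ t, row s t = B t := by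
        intro t
        apply Finset.eq_of_subset_of_card_le
        · intro y hy
          obtain ⟨i, rfl⟩ := hblkX _ _ hy
          exact hg i t
        · rw [(hPB _ (hBP t)).1]
          exact (blk_card x hx _).ge
      refine ⟨s, ?_, ?_⟩
      · rw [Finset.mem_coe, hA, Finset.mem_filter]
        refine ⟨Finset.mem_univ _, ?_, ?_⟩
        · ext1 t
          exact hg0 t
        · intro t
          have := (hPB _ (hBP t)).2.2
          rw [← hrowB t] at this
          exact this
      · ext D
        simp only [hf, Finset.mem_image, Finset.mem_univ, true_and]
        constructor
        · rintro ⟨t, rfl⟩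
          rw [hrowB]; exact hBP t
        · intro hD
          obtain ⟨y, hy⟩ := Finset.card_eq_one.1 ((hPB _ hD).2.1 0)
          have hy' : y ∈ D ∩ C 0 := by rw [hy]; simp
          rw [Finset.mem_inter] at hy'
          obtain ⟨t, rfl⟩ := hxsurj 0 y hy'.2
          exact ⟨t, by rw [hrowB]; exact hBeq _ (hBP t) _ hD _ (hB0 t) hy'.1⟩
    · rintro ⟨s, hs, rfl⟩
      rw [Finset.mem_coe, hA, Finset.mem_filter] at hs
      obtain ⟨-, hs0, hsp⟩ := hs
      refine ⟨?_, ?_, ?_, ?_⟩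
      · rw [hf]
        simp only
        rw [Finset.card_image_of_injective _ (hrowinj s)]
        simp
      · intro D hD D' hD' hne
        obtain ⟨t, -, rfl⟩ := Finset.mem_image.1 hD
        obtain ⟨t', -, rfl⟩ := Finset.mem_image.1 hD'
        exact hrowdisj s t t' (fun h => hne (by rw [h]))
      · ext y
        rw [Finset.mem_biUnion]
        constructor
        · rintro ⟨D, hD, hy⟩
          obtain ⟨t, -, rfl⟩ := Finset.mem_image.1 hD
          obtain ⟨i, rfl⟩ := hblkX _ _ hy
          exact hxX _ _
        · intro hy
          obtain ⟨i, j, rfl⟩ := hXx y hy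
          refine ⟨row s ((s i).symm j), Finset.mem_image_of_mem _ (Finset.mem_univ _), ?_⟩
          exact (hmemb _ _ _).2 (by simp)
      · intro D hD
        obtain ⟨t, -, rfl⟩ := Finset.mem_image.1 hD
        refine ⟨blk_card x hx _, ?_, hsp t⟩
        intro i
        rw [Finset.card_eq_one]
        refine ⟨x i (s i t), ?_⟩
        ext y
        rw [Finset.mem_inter, Finset.mem_singleton]
        constructor
        · rintro ⟨h1, h2⟩
          obtain ⟨m, rfl⟩ := hblkX _ _ h1
          obtain rfl := hcol _ _ _ h2 (hxC _ _)
          rfl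
        · rintro rfl
          exact ⟨(hmemb _ _ _).2 rfl, hxC _ _⟩
  unfold cBP
  rw [himage, Set.ncard_image_of_injOn hinj, Set.ncard_coe_finset]
  exact hev
end

section
/- Let d = 2, let p ∈ ℝ², and let k ≥ 6. Let X be a set of 3k points in ℝ² partitioned into 3 color classes C_0, C_1, C_2 of exactly k points each, with X ∪ {p} in general position. If cBP_k(X) > 0, then cBP_k(X) ≥ 8 · 3^{k−6}. -/
open scoped Classical

namespace Birch

/-- A colored Birch partition in abstract form. -/
def Sol {k : ℕ} (K : Fin k → Fin k → Fin k → Prop) (s : Fin k → Fin k × Fin k) : Prop :=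
  (Function.Injective fun i => (s i).1) ∧ (Function.Injective fun i => (s i).2) ∧
    ∀ i, K i (s i).1 (s i).2

/-- Solutions agreeing with `s` outside `F`. -/
noncomputable def Near {k : ℕ} (K : Fin k → Fin k → Fin k → Prop) (s : Fin k → Fin k × Fin k)
    (F : Finset (Fin k)) : Finset (Fin k → Fin k × Fin k) :=
  Finset.univ.filter fun t => Sol K t ∧ ∀ i, i ∉ F → t i = s i

/-- The lower bound function. -/
def g : ℕ → ℕ
  | 0 => 1
  | 1 => 1
  | 2 => 1
  | 3 => 1
  | 4 => 2
  | 5 => 4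
  | 6 => 8
  | (n + 7) => 3 * g (n + 6)

lemma mem_Near {k : ℕ} {K : Fin k → Fin k → Fin k → Prop} {s t : Fin k → Fin k × Fin k}
    {F : Finset (Fin k)} : t ∈ Near K s F ↔ Sol K t ∧ ∀ i, i ∉ F → t i = s i := by
  simp [Near]

lemma even_sum {k : ℕ} (x y z : Fin k → Fin k → ZMod 2) (s : Fin k → Fin k × Fin k)
    (F : Finset (Fin k)) (hF : F.card = 4) :
    ∑ t ∈ (Finset.univ.filter fun t : Fin k → Fin k × Fin k =>
      (Function.Injective fun i => (t i).1) ∧ (Function.Injective fun i => (t i).2) ∧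
        ∀ i, i ∉ F → t i = s i),
      ∏ i ∈ F, (x i (t i).1 + y (t i).1 (t i).2 + z (t i).2 i) = 0 := by
  set h : Fin 3 → Fin k → Fin k × Fin k → ZMod 2 := fun c i v =>
    if c = 0 then x i v.1 else if c = 1 then y v.1 v.2 else z v.2 i with hh
  have e1 : ∀ t : Fin k → Fin k × Fin k,
      ∏ i ∈ F, (x i (t i).1 + y (t i).1 (t i).2 + z (t i).2 i) =
        ∑ f ∈ F.pi (fun _ => (Finset.univ : Finset (Fin 3))),
          ∏ i ∈ F.attach, h (f i.1 i.2) i.1 (t i.1) := by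
    intro t
    rw [← Finset.prod_sum F (fun _ => (Finset.univ : Finset (Fin 3))) (fun i c => h c i (t i))]
    refine Finset.prod_congr rfl fun i _ => ?_
    simp [Fin.sum_univ_three, hh]
  simp_rw [e1]
  rw [Finset.sum_comm]
  refine Finset.sum_eq_zero fun f _ => ?_
  obtain ⟨i, _, j, _, hij, hf⟩ := Finset.exists_ne_map_eq_of_card_lt_of_maps_to
    (s := F.attach) (t := (Finset.univ : Finset (Fin 3))) (f := fun i => f i.1 i.2)
    (by simp [hF]) (by intro a _; simp)
  have hij' : i.1 ≠ j.1 := fun e => hij (Subtype.ext e)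
  have two : ∀ u : ZMod 2, u + u = 0 := by decide
  -- the involution
  set c := f i.1 i.2 with hc
  have key : ∀ t : Fin k → Fin k × Fin k, ∀ t' : Fin k → Fin k × Fin k,
      (∀ l, l ≠ i.1 → l ≠ j.1 → t' l = t l) →
      h c i.1 (t' i.1) * h c j.1 (t' j.1) = h c i.1 (t i.1) * h c j.1 (t j.1) →
      ∏ l ∈ F.attach, h (f l.1 l.2) l.1 (t' l.1) = ∏ l ∈ F.attach, h (f l.1 l.2) l.1 (t l.1) := by
    intro t t' h1 h2
    have hi : i ∈ F.attach := Finset.mem_attach _ _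
    have hj : j ∈ F.attach.erase i := by simp [hij.symm]
    rw [← Finset.mul_prod_erase _ _ hi, ← Finset.mul_prod_erase _ _ hj,
      ← Finset.mul_prod_erase F.attach _ hi, ← Finset.mul_prod_erase (F.attach.erase i) _ hj,
      ← mul_assoc, ← mul_assoc]
    have : f j.1 j.2 = c := hf.symm
    rw [this, ← hc, h2]
    congr 1
    refine Finset.prod_congr rfl fun l hl => ?_
    simp only [Finset.mem_erase] at hl
    rw [h1 l.1 (fun e => hl.2.1 (Subtype.ext e)) (fun e => hl.1 (Subtype.ext e))]
  let w : Fin k → Fin k := Equiv.swap i.1 j.1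
  have wi : w i.1 = j.1 := Equiv.swap_apply_left _ _
  have wj : w j.1 = i.1 := Equiv.swap_apply_right _ _
  have wl : ∀ l, l ≠ i.1 → l ≠ j.1 → w l = l := fun l h1 h2 => Equiv.swap_apply_of_ne_of_ne h1 h2
  have ww : ∀ l, w (w l) = l := fun l => Equiv.swap_apply_self _ _ _
  have winj : Function.Injective w := (Equiv.swap i.1 j.1).injective
  have w_ne : ∀ l, l ∉ F → w l = l := fun l hl =>
    wl l (fun e => hl (e ▸ i.2)) (fun e => hl (e ▸ j.2))
  have fin : ∀ w1 w2 : Fin k → Fin k, (w1 = id ∨ w1 = w) → (w2 = id ∨ w2 = w) →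
      (w1 = w ∨ w2 = w) →
      (∀ t : Fin k → Fin k × Fin k, h c i.1 ((t (w1 i.1)).1, (t (w2 i.1)).2) *
        h c j.1 ((t (w1 j.1)).1, (t (w2 j.1)).2) = h c i.1 (t i.1) * h c j.1 (t j.1)) →
      ∑ t ∈ (Finset.univ.filter fun t : Fin k → Fin k × Fin k =>
      (Function.Injective fun i => (t i).1) ∧ (Function.Injective fun i => (t i).2) ∧
        ∀ i, i ∉ F → t i = s i),
        ∏ l ∈ F.attach, h (f l.1 l.2) l.1 (t l.1) = 0 := by
    intro w1 w2 h1 h2 h3 h4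
    have inv1 : ∀ l, w1 (w1 l) = l := by
      rcases h1 with rfl | rfl
      · intro l; rfl
      · exact ww
    have inv2 : ∀ l, w2 (w2 l) = l := by
      rcases h2 with rfl | rfl
      · intro l; rfl
      · exact ww
    have out1 : ∀ l, l ≠ i.1 → l ≠ j.1 → w1 l = l := by
      rcases h1 with rfl | rfl
      · intro l _ _; rfl
      · exact wl
    have out2 : ∀ l, l ≠ i.1 → l ≠ j.1 → w2 l = l := by
      rcases h2 with rfl | rfl
      · intro l _ _; rfl
      · exact wl
    refine Finset.sum_involution (fun t _ l => ((t (w1 l)).1, (t (w2 l)).2)) ?_ ?_ ?_ ?_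
    · intro t _
      rw [key t (fun l => ((t (w1 l)).1, (t (w2 l)).2)) ?_ (h4 t)]
      · exact two _
      · intro l hl1 hl2
        simp only [out1 l hl1 hl2, out2 l hl1 hl2]
    · intro t ht _ e
      simp only [Finset.mem_filter, Finset.mem_univ, true_and] at ht
      have e1 := congrFun e i.1
      rcases h3 with h3 | h3
      · have := congrArg Prod.fst e1
        simp only [h3, wi] at this
        exact hij' (ht.1 this).symm
      · have := congrArg Prod.snd e1
        simp only [h3, wi] at this
        exact hij' (ht.2.1 this).symm
    · intro t ht
      simp only [Finset.mem_filter, Finset.mem_univ, true_and] at ht ⊢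
      refine ⟨fun a b hab => ?_, fun a b hab => ?_, fun l hl => ?_⟩
      · have := ht.1 hab
        rw [← inv1 a, this, inv1]
      · have := ht.2.1 hab
        rw [← inv2 a, this, inv2]
      · have hi : l ≠ i.1 := fun e => hl (e ▸ i.2)
        have hj : l ≠ j.1 := fun e => hl (e ▸ j.2)
        rw [out1 l hi hj, out2 l hi hj, ← ht.2.2 l hl]
    · intro t _
      funext l
      simp only [inv1, inv2]
  have hc3 : c = 0 ∨ c = 1 ∨ c = 2 := by
    generalize c = d
    revert d; decide
  rcases hc3 with h0 | h0 | h0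
  · refine fin id w (Or.inl rfl) (Or.inr rfl) (Or.inr rfl) fun t => ?_
    simp [hh, h0]
  · refine fin w w (Or.inr rfl) (Or.inr rfl) (Or.inr rfl) fun t => ?_
    simp [hh, h0, wi, wj, mul_comm]
  · refine fin w id (Or.inr rfl) (Or.inl rfl) (Or.inl rfl) fun t => ?_
    simp [hh, h0]

/-- The structural hypothesis on the incidence predicate. -/
def Lin {k : ℕ} (K : Fin k → Fin k → Fin k → Prop) : Prop :=
  ∃ x y z : Fin k → Fin k → ZMod 2, ∀ a b c, K a b c ↔ x a b + y b c + z c a = 1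

lemma four {k : ℕ} {K : Fin k → Fin k → Fin k → Prop} (hK : Lin K) {s : Fin k → Fin k × Fin k}
    (hs : Sol K s) (F : Finset (Fin k)) (hF : F.card = 4) :
    ∃ t, Sol K t ∧ (∀ i, i ∉ F → t i = s i) ∧ t ≠ s := by
  obtain ⟨x, y, z, hxyz⟩ := hK
  have h0 := even_sum x y z s F hF
  by_contra hcon
  push Not at hcon
  rw [Finset.sum_eq_single s] at h0
  · rw [Finset.prod_eq_one] at h0
    · exact absurd h0 (by decide)
    · intro i _
      exact (hxyz _ _ _).1 (hs.2.2 i)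
  · intro t ht hts
    simp only [Finset.mem_filter, Finset.mem_univ, true_and] at ht
    have : ¬ Sol K t := fun h => hts (hcon t h ht.2.2)
    have h1 : ∃ i, ¬ K i (t i).1 (t i).2 := by
      by_contra h2
      push Not at h2
      exact this ⟨ht.1, ht.2.1, h2⟩
    obtain ⟨i, hi⟩ := h1
    have hiF : i ∈ F := by
      by_contra h2
      rw [ht.2.2 i h2] at hi
      exact hi (hs.2.2 i)
    refine Finset.prod_eq_zero hiF ?_
    have h3 : ∀ u : ZMod 2, u ≠ 1 → u = 0 := by decide
    exact h3 _ (fun e => hi ((hxyz _ _ _).2 e))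
  · intro h
    exact absurd (by simp only [Finset.mem_filter, Finset.mem_univ, true_and]
                     exact ⟨hs.1, hs.2.1, fun _ _ => trivial⟩) h

lemma three {k : ℕ} {K : Fin k → Fin k → Fin k → Prop} (hK : Lin K) {s : Fin k → Fin k × Fin k}
    (hs : Sol K s) (F : Finset (Fin k)) (hF : 7 ≤ F.card) :
    ∃ x ∈ F, ∃ t ∈ Near K s F, ∃ u ∈ Near K s F, t x ≠ s x ∧ u x ≠ s x ∧ t x ≠ u x := by
  by_contra hcon
  push Not at hcon
  -- a maximal free set
  obtain ⟨M, hM, hmax⟩ := Finset.exists_max_image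
    (F.powerset.filter fun M => ∀ t, Sol K t → (∀ i, i ∉ M → t i = s i) → t = s)
    Finset.card ⟨∅, by
      simp only [Finset.mem_filter, Finset.mem_powerset, Finset.empty_subset, true_and]
      intro t _ h
      exact funext fun i => h i (Finset.notMem_empty i)⟩
  simp only [Finset.mem_filter, Finset.mem_powerset] at hM hmax
  obtain ⟨hMF, hfree⟩ := hM
  have hM3 : M.card ≤ 3 := by
    by_contra h
    obtain ⟨N, hN, hN4⟩ := Finset.exists_subset_card_eq (show 4 ≤ M.card by omega)
    obtain ⟨t, h1, h2, h3⟩ := four hK hs N hN4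
    exact h3 (hfree t h1 fun i hi => h2 i fun h => hi (hN h))
  have hex : ∀ y, ∃ t, ∃ m, y ∈ F \ M → Sol K t ∧ (∀ i, i ∉ insert y M → t i = s i) ∧
      m ∈ M ∧ t m ≠ s m := by
    intro y
    by_cases hy : y ∈ F \ M
    swap
    · exact ⟨s, y, fun h => absurd h hy⟩
    rw [Finset.mem_sdiff] at hy
    have h1 : ¬ ∀ t, Sol K t → (∀ i, i ∉ insert y M → t i = s i) → t = s := by
      intro h
      have := hmax (insert y M) ⟨Finset.insert_subset hy.1 hMF, h⟩
      rw [Finset.card_insert_of_notMem hy.2] at this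
      omega
    push Not at h1
    obtain ⟨t, ht1, ht2, ht3⟩ := h1
    have h2 : ∃ m ∈ M, t m ≠ s m := by
      by_contra h
      push Not at h
      have h3 : ∀ i, i ≠ y → t i = s i := by
        intro i hi
        by_cases him : i ∈ M
        · exact h i him
        · exact ht2 i (by simp [hi, him])
      apply ht3
      funext i
      by_cases hi : i = y
      · subst hi
        apply Prod.ext
        · obtain ⟨j, hj⟩ := (Finite.injective_iff_surjective.1 hs.1) (t i).1
          simp only at hj
          by_cases hji : j = i
          · rw [← hj, hji]
          · exfalso
            rw [← h3 j hji] at hj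
            exact hji (ht1.1 hj)
        · obtain ⟨j, hj⟩ := (Finite.injective_iff_surjective.1 hs.2.1) (t i).2
          simp only at hj
          by_cases hji : j = i
          · rw [← hj, hji]
          · exfalso
            rw [← h3 j hji] at hj
            exact hji (ht1.2.1 hj)
      · exact h3 i hi
    obtain ⟨m, hm, hm2⟩ := h2
    exact ⟨t, m, fun _ => ⟨ht1, ht2, hm, hm2⟩⟩
  choose T m hTm using hex
  have hcard : (F \ M).card ≤ M.card := by
    refine Finset.card_le_card_of_injOn m (fun y hy => (hTm y hy).2.2.1) ?_
    intro y hy y' hy' hyy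
    by_contra hne
    obtain ⟨a1, a2, a3, a4⟩ := hTm y hy
    obtain ⟨b1, b2, b3, b4⟩ := hTm y' hy'
    have hyF := Finset.mem_sdiff.1 hy
    have hyF' := Finset.mem_sdiff.1 hy'
    have hN : T y ∈ Near K s F := mem_Near.2 ⟨a1, fun i hi => a2 i (by
      rw [Finset.mem_insert]; rintro (rfl | h)
      · exact hi hyF.1
      · exact hi (hMF h))⟩
    have hN' : T y' ∈ Near K s F := mem_Near.2 ⟨b1, fun i hi => b2 i (by
      rw [Finset.mem_insert]; rintro (rfl | h)
      · exact hi hyF'.1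
      · exact hi (hMF h))⟩
    have agree : ∀ i, T y i ≠ s i → T y' i ≠ s i → T y i = T y' i := by
      intro i h1 h2
      by_cases hi : i ∈ F
      · exact hcon i hi _ hN _ hN' h1 h2
      · exact absurd ((mem_Near.1 hN).2 i hi) h1
    let t : Fin k → Fin k × Fin k := fun i => if T y i ≠ s i ∧ T y' i ≠ s i then T y i else s i
    have tI : ∀ i, (T y i ≠ s i ∧ T y' i ≠ s i) → t i = T y i := fun i h => if_pos h
    have tO : ∀ i, ¬ (T y i ≠ s i ∧ T y' i ≠ s i) → t i = s i := fun i h => if_neg h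
    have cross : ∀ i j, (T y i ≠ s i ∧ T y' i ≠ s i) → ¬ (T y j ≠ s j ∧ T y' j ≠ s j) →
        (T y i).1 ≠ (s j).1 ∧ (T y i).2 ≠ (s j).2 := by
      intro i j hi hj
      have hij : i ≠ j := by rintro rfl; exact hj hi
      by_cases h1 : T y j = s j
      · rw [← h1]
        exact ⟨fun e => hij (a1.1 e), fun e => hij (a1.2.1 e)⟩
      · have h2 : T y' j = s j := by
          by_contra h2; exact hj ⟨h1, h2⟩
        rw [← h2, agree i hi.1 hi.2]
        exact ⟨fun e => hij (b1.1 e), fun e => hij (b1.2.1 e)⟩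
    have tSol : Sol K t := by
      refine ⟨fun i j hij => ?_, fun i j hij => ?_, fun i => ?_⟩
      · simp only at hij
        by_cases hi : T y i ≠ s i ∧ T y' i ≠ s i <;> by_cases hj : T y j ≠ s j ∧ T y' j ≠ s j
        · rw [tI i hi, tI j hj] at hij; exact a1.1 hij
        · rw [tI i hi, tO j hj] at hij; exact absurd hij (cross i j hi hj).1
        · rw [tO i hi, tI j hj] at hij; exact absurd hij.symm (cross j i hj hi).1
        · rw [tO i hi, tO j hj] at hij; exact hs.1 hij
      · simp only at hij
        by_cases hi : T y i ≠ s i ∧ T y' i ≠ s i <;> by_cases hj : T y j ≠ s j ∧ T y' j ≠ s j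
        · rw [tI i hi, tI j hj] at hij; exact a1.2.1 hij
        · rw [tI i hi, tO j hj] at hij; exact absurd hij (cross i j hi hj).2
        · rw [tO i hi, tI j hj] at hij; exact absurd hij.symm (cross j i hj hi).2
        · rw [tO i hi, tO j hj] at hij; exact hs.2.1 hij
      · by_cases hi : T y i ≠ s i ∧ T y' i ≠ s i
        · rw [tI i hi]; exact a1.2.2 i
        · rw [tO i hi]; exact hs.2.2 i
    have hts : t = s := by
      refine hfree t tSol fun i hi => tO i ?_
      rintro ⟨h1, h2⟩
      have c1 : i = y := by
        by_contra h
        exact h1 (a2 i (by simp [h, hi]))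
      have c2 : i = y' := by
        by_contra h
        exact h2 (b2 i (by simp [h, hi]))
      exact hne (c1.symm.trans c2)
    have := tI (m y) ⟨a4, by rw [hyy]; exact b4⟩
    rw [hts] at this
    exact a4 this.symm
  have := Finset.card_sdiff_add_card_eq_card hMF
  omega

lemma Near_le {k : ℕ} {K : Fin k → Fin k → Fin k → Prop} {s : Fin k → Fin k × Fin k}
    (F : Finset (Fin k)) (x : Fin k) (n : ℕ)
    (hn : ∀ t ∈ Near K s F, n ≤ (Near K t (F.erase x)).card)
    (A : Finset (Fin k → Fin k × Fin k)) (hA : A ⊆ Near K s F)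
    (hinj : Set.InjOn (fun t => t x) (A : Set (Fin k → Fin k × Fin k))) :
    A.card * n ≤ (Near K s F).card := by
  have h1 : A.biUnion (fun t => Near K t (F.erase x)) ⊆ Near K s F := by
    intro u hu
    rw [Finset.mem_biUnion] at hu
    obtain ⟨t, ht, hu⟩ := hu
    rw [mem_Near] at hu ⊢
    refine ⟨hu.1, fun i hi => ?_⟩
    rw [hu.2 i (fun h => hi (Finset.mem_of_mem_erase h))]
    exact (mem_Near.1 (hA ht)).2 i hi
  refine le_trans ?_ (Finset.card_le_card h1)
  rw [Finset.card_biUnion]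
  · rw [← smul_eq_mul]
    exact Finset.card_nsmul_le_sum _ _ _ fun t ht => hn t (hA ht)
  · intro t ht u hu htu
    refine Finset.disjoint_left.2 ?_
    intro v hv hv'
    apply htu
    apply hinj ht hu
    have e1 := (mem_Near.1 hv).2 x (Finset.notMem_erase x F)
    have e2 := (mem_Near.1 hv').2 x (Finset.notMem_erase x F)
    simp only
    rw [← e1, ← e2]

lemma bound {k : ℕ} {K : Fin k → Fin k → Fin k → Prop} (hK : Lin K) :
    ∀ n, ∀ s, Sol K s → ∀ F : Finset (Fin k), F.card = n → g n ≤ (Near K s F).card := by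
  intro n
  induction n with
  | zero =>
    intro s hs F _
    exact Finset.card_pos.2 ⟨s, mem_Near.2 ⟨hs, fun _ _ => rfl⟩⟩
  | succ n ih =>
    intro s hs F hF
    have hsN : s ∈ Near K s F := mem_Near.2 ⟨hs, fun _ _ => rfl⟩
    have step : ∀ x ∈ F, ∀ t ∈ Near K s F, g n ≤ (Near K t (F.erase x)).card := by
      intro x hx t ht
      exact ih t (mem_Near.1 ht).1 _ (by rw [Finset.card_erase_of_mem hx, hF]; rfl)
    have h2 : 4 ≤ n + 1 → 2 * g n ≤ (Near K s F).card := by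
      intro hn
      obtain ⟨N, hN, hN4⟩ := Finset.exists_subset_card_eq (show 4 ≤ F.card by omega)
      obtain ⟨t, t1, t2, t3⟩ := four hK hs N hN4
      obtain ⟨x, hx⟩ := Function.ne_iff.1 t3
      have hxN : x ∈ N := by
        by_contra h
        exact hx (t2 x h)
      have htN : t ∈ Near K s F := mem_Near.2 ⟨t1, fun i hi => t2 i fun h => hi (hN h)⟩
      have := Near_le (K := K) (s := s) F x (g n) (step x (hN hxN)) {t, s}
        (by intro u hu; simp only [Finset.mem_insert, Finset.mem_singleton] at hu
            rcases hu with rfl | rfl <;> assumption)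
        (by intro u hu v hv huv
            simp only [Finset.coe_insert, Finset.coe_singleton, Set.mem_insert_iff,
              Set.mem_singleton_iff] at hu hv huv
            rcases hu with rfl | rfl <;> rcases hv with rfl | rfl <;> grind)
      rwa [Finset.card_pair t3] at this
    have h3 : 7 ≤ n + 1 → 3 * g n ≤ (Near K s F).card := by
      intro hn
      obtain ⟨x, hx, t, ht, u, hu, h1, h2, h3⟩ := three hK hs F (by omega)
      have hts : t ≠ s := fun e => h1 (by rw [e])
      have hus : u ≠ s := fun e => h2 (by rw [e])
      have htu : t ≠ u := fun e => h3 (by rw [e])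
      have := Near_le (K := K) (s := s) F x (g n) (step x hx) {t, u, s}
        (by intro v hv; simp only [Finset.mem_insert, Finset.mem_singleton] at hv
            rcases hv with rfl | rfl | rfl <;> assumption)
        (by intro v hv w hw hvw
            simp only [Finset.coe_insert, Finset.coe_singleton, Set.mem_insert_iff,
              Set.mem_singleton_iff] at hv hw hvw
            rcases hv with rfl | rfl | rfl <;> rcases hw with rfl | rfl | rfl <;> grind)
      rwa [Finset.card_eq_three.2 ⟨t, u, s, htu, hts, hus, rfl⟩] at this
    have h1 : 1 ≤ (Near K s F).card := Finset.card_pos.2 ⟨s, hsN⟩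
    match n, h1, h2, h3 with
    | 0, h1, _, _ => exact h1
    | 1, h1, _, _ => exact h1
    | 2, h1, _, _ => exact h1
    | 3, _, h2, _ => exact h2 (by omega)
    | 4, _, h2, _ => exact h2 (by omega)
    | 5, _, h2, _ => exact h2 (by omega)
    | (m + 6), _, _, h3 => exact h3 (by omega)

lemma g_eq (n : ℕ) : g (n + 6) = 8 * 3 ^ n := by
  induction n with
  | zero => rfl
  | succ n ih => 
    show 3 * g (n + 6) = _
    rw [ih, pow_succ]; ring

lemma main_abs {k : ℕ} (hk : 6 ≤ k) {K : Fin k → Fin k → Fin k → Prop} (hK : Lin K)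
    (s : Fin k → Fin k × Fin k) (hs : Sol K s) :
    8 * 3 ^ (k - 6) ≤ (Finset.univ.filter fun t => Sol K t).card := by
  have := bound hK k s hs Finset.univ (by simp)
  obtain ⟨m, rfl⟩ := Nat.exists_eq_add_of_le' hk
  rw [g_eq] at this
  rw [Nat.add_sub_cancel]
  refine this.trans (Finset.card_le_card fun t ht => ?_)
  simpa using (mem_Near.1 ht).1

end Birch

namespace Birch

/-- Planar determinant. -/
def D (u v : Fin 2 → ℝ) : ℝ := u 0 * v 1 - u 1 * v 0

/-- Sign condition for `0` in the triangle `u v w`. -/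
def Tri (u v w : Fin 2 → ℝ) : Prop :=
  (0 < D u v ∧ 0 < D v w ∧ 0 < D w u) ∨ (D u v < 0 ∧ D v w < 0 ∧ D w u < 0)

lemma D_swap (u v : Fin 2 → ℝ) : D v u = - D u v := by simp only [D]; ring

lemma GP (q a b c : Fin 2 → ℝ) :
    D q a * D b c + D q b * D c a + D q c * D a b = 0 := by simp only [D]; ring

/-- Indicator bit. -/
noncomputable def ind (P : Prop) : ZMod 2 := if P then 1 else 0

lemma ind_true : ind True = 1 := if_pos trivial

lemma ind_false : ind False = 0 := if_neg id

lemma tri_lin (q a b c : Fin 2 → ℝ) (hqa : D q a ≠ 0) (hqb : D q b ≠ 0) (hqc : D q c ≠ 0)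
    (hab : D a b ≠ 0) (hbc : D b c ≠ 0) (hca : D c a ≠ 0) :
    Tri a b c ↔ ind (Tri q a b) + ind (Tri q b c) + ind (Tri q c a) = 1 := by
  have gp := GP q a b c
  simp only [Tri]
  rw [D_swap q a, D_swap q b, D_swap q c]
  generalize D q a = x1 at *
  generalize D q b = x2 at *
  generalize D q c = x3 at *
  generalize D a b = y3 at *
  generalize D b c = y1 at *
  generalize D c a = y2 at *
  have t1 : (1 : ZMod 2) + 1 = 0 := by decide
  have t0 : (0 : ZMod 2) ≠ 1 := by decide
  have t3 : (1 : ZMod 2) + 1 + 1 = 1 := by decide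
  rcases lt_or_gt_of_ne hqa with h1 | h1 <;> rcases lt_or_gt_of_ne hqb with h2 | h2 <;>
  rcases lt_or_gt_of_ne hqc with h3 | h3 <;> rcases lt_or_gt_of_ne hbc with h4 | h4 <;>
  rcases lt_or_gt_of_ne hca with h5 | h5 <;> rcases lt_or_gt_of_ne hab with h6 | h6 <;>
  first
  | (simp [h1, h2, h3, h4, h5, h6, not_lt_of_gt, t1, ind_true, ind_false]; done)
  | (exfalso
     first
     | nlinarith [mul_pos h1 h4, mul_pos h2 h5, mul_pos h3 h6]
     | nlinarith [mul_pos_of_neg_of_neg h1 h4, mul_pos_of_neg_of_neg h2 h5, mul_pos_of_neg_of_neg h3 h6]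
     | nlinarith)

lemma hull_iff (p a b c : Fin 2 → ℝ) (hab : D (a - p) (b - p) ≠ 0) (hbc : D (b - p) (c - p) ≠ 0)
    (hca : D (c - p) (a - p) ≠ 0) :
    p ∈ convexHull ℝ ({a, b, c} : Set (Fin 2 → ℝ)) ↔ Tri (a - p) (b - p) (c - p) := by
  constructor
  · intro h
    rw [convexHull_insert (by simp), convexHull_pair] at h
    simp only [convexJoin_singleton_left, Set.mem_iUnion] at h
    obtain ⟨y, hy, hp⟩ := h
    obtain ⟨v1, v2, hv1, hv2, hv, rfl⟩ := hy
    obtain ⟨w1, w2, hw1, hw2, hw, hp⟩ := hp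
    have e0 := congrFun hp 0
    have e1 := congrFun hp 1
    simp only [Pi.add_apply, Pi.smul_apply, smul_eq_mul] at e0 e1
    obtain ⟨r2, hr2⟩ : ∃ r, r = w2 * v1 := ⟨_, rfl⟩
    obtain ⟨r3, hr3⟩ : ∃ r, r = w2 * v2 := ⟨_, rfl⟩
    have n2 : 0 ≤ r2 := hr2 ▸ mul_nonneg hw2 hv1
    have n3 : 0 ≤ r3 := hr3 ▸ mul_nonneg hw2 hv2
    have hsum : w1 + r2 + r3 = 1 := by
      rw [hr2, hr3, add_assoc, ← mul_add, hv, mul_one, hw]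
    have f0 : w1 * (a 0 - p 0) + r2 * (b 0 - p 0) + r3 * (c 0 - p 0) = 0 := by
      rw [hr2, hr3] at *; linear_combination e0 - p 0 * hsum
    have f1 : w1 * (a 1 - p 1) + r2 * (b 1 - p 1) + r3 * (c 1 - p 1) = 0 := by
      rw [hr2, hr3] at *; linear_combination e1 - p 1 * hsum
    have g1 : r2 * D (a - p) (b - p) = r3 * D (c - p) (a - p) := by
      simp only [D, Pi.sub_apply]
      linear_combination (a 0 - p 0) * f1 - (a 1 - p 1) * f0
    have g2 : r3 * D (b - p) (c - p) = w1 * D (a - p) (b - p) := by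
      simp only [D, Pi.sub_apply]
      linear_combination (b 0 - p 0) * f1 - (b 1 - p 1) * f0
    have g3 : w1 * D (c - p) (a - p) = r2 * D (b - p) (c - p) := by
      simp only [D, Pi.sub_apply]
      linear_combination (c 0 - p 0) * f1 - (c 1 - p 1) * f0
    have k1 : w1 ≠ 0 := by
      intro h
      rw [h, zero_mul] at g2 g3
      have z3 : r3 = 0 := (mul_eq_zero.1 g2).resolve_right hbc
      have z2 : r2 = 0 := (mul_eq_zero.1 g3.symm).resolve_right hbc
      rw [h, z3, z2] at hsum; norm_num at hsum
    have k2 : r2 ≠ 0 := by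
      intro h
      rw [h, zero_mul] at g1 g3
      exact k1 ((mul_eq_zero.1 g3).resolve_right hca)
    have k3 : r3 ≠ 0 := by
      intro h
      rw [h, zero_mul] at g1 g2
      exact k1 ((mul_eq_zero.1 g2.symm).resolve_right hab)
    have p1 : 0 < w1 := lt_of_le_of_ne hw1 (Ne.symm k1)
    have p2 : 0 < r2 := lt_of_le_of_ne n2 (Ne.symm k2)
    have p3 : 0 < r3 := lt_of_le_of_ne n3 (Ne.symm k3)
    rcases lt_or_gt_of_ne hab with h | h
    · right
      refine ⟨h, ?_, ?_⟩
      · have : r3 * D (b - p) (c - p) < 0 := by rw [g2]; exact mul_neg_of_pos_of_neg p1 h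
        exact (pos_iff_neg_of_mul_neg this).1 p3
      · have : r3 * D (c - p) (a - p) < 0 := by rw [← g1]; exact mul_neg_of_pos_of_neg p2 h
        exact (pos_iff_neg_of_mul_neg this).1 p3
    · left
      refine ⟨h, ?_, ?_⟩
      · have : 0 < r3 * D (b - p) (c - p) := by rw [g2]; exact mul_pos p1 h
        exact (pos_iff_pos_of_mul_pos this).1 p3
      · have : 0 < r3 * D (c - p) (a - p) := by rw [← g1]; exact mul_pos p2 h
        exact (pos_iff_pos_of_mul_pos this).1 p3
  · intro h
    obtain ⟨S, hS⟩ : ∃ S, S = D (a - p) (b - p) + D (b - p) (c - p) + D (c - p) (a - p) :=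
      ⟨_, rfl⟩
    have hw : 0 < D (b - p) (c - p) / S ∧ 0 < D (c - p) (a - p) / S ∧
        0 < D (a - p) (b - p) / S ∧ S ≠ 0 := by
      rcases h with ⟨h1, h2, h3⟩ | ⟨h1, h2, h3⟩
      · have : 0 < S := by rw [hS]; positivity
        exact ⟨div_pos h2 this, div_pos h3 this, div_pos h1 this, this.ne'⟩
      · have : S < 0 := by rw [hS]; linarith
        exact ⟨div_pos_of_neg_of_neg h2 this, div_pos_of_neg_of_neg h3 this,
          div_pos_of_neg_of_neg h1 this, this.ne⟩
    obtain ⟨w1, w2, w3, hS0⟩ := hw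
    have hp : p = (D (b - p) (c - p) / S) • a + (D (c - p) (a - p) / S) • b +
        (D (a - p) (b - p) / S) • c := by
      funext i
      simp only [Pi.add_apply, Pi.smul_apply, smul_eq_mul]
      field_simp
      rw [hS]
      simp only [D, Pi.sub_apply]
      fin_cases i <;> simp <;> ring
    have hsum : D (b - p) (c - p) / S + D (c - p) (a - p) / S + D (a - p) (b - p) / S = 1 := by
      field_simp; rw [hS]; ring
    have hconv := convex_convexHull ℝ ({a, b, c} : Set (Fin 2 → ℝ))
    have := hconv.sum_mem (t := (Finset.univ : Finset (Fin 3)))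
      (w := ![D (b - p) (c - p) / S, D (c - p) (a - p) / S, D (a - p) (b - p) / S])
      (z := ![a, b, c])
      (by intro i _; fin_cases i
          · exact w1.le
          · exact w2.le
          · exact w3.le)
      (by simpa [Fin.sum_univ_three] using hsum)
      (by intro i _; apply subset_convexHull; fin_cases i <;> simp)
    simp only [Fin.sum_univ_three] at this
    have e : (![D (b - p) (c - p) / S, D (c - p) (a - p) / S, D (a - p) (b - p) / S] 0 •
      (![a, b, c] : Fin 3 → Fin 2 → ℝ) 0 + ![D (b - p) (c - p) / S, D (c - p) (a - p) / S, D (a - p) (b - p) / S] 1 •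
      (![a, b, c] : Fin 3 → Fin 2 → ℝ) 1 + ![D (b - p) (c - p) / S, D (c - p) (a - p) / S, D (a - p) (b - p) / S] 2 •
      (![a, b, c] : Fin 3 → Fin 2 → ℝ) 2) = p := hp.symm
    rw [e] at this
    exact this

lemma D_ne {p : Fin 2 → ℝ} {X : Finset (Fin 2 → ℝ)} (hpX : p ∉ X)
    (hgen : GenPos 2 (↑X ∪ {p})) {u v : Fin 2 → ℝ} (hu : u ∈ X) (hv : v ∈ X) (huv : u ≠ v) :
    D (u - p) (v - p) ≠ 0 := by
  intro h
  have hup : u ≠ p := fun e => hpX (e ▸ hu)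
  have hvp : v ≠ p := fun e => hpX (e ▸ hv)
  refine hgen 1 (by norm_num) {u, v, p} ?_ (Finset.card_eq_three.2 ⟨u, v, p, huv, hup, hvp, rfl⟩) ?_
  · intro x hx
    simp only [Finset.coe_insert, Finset.coe_singleton, Set.mem_insert_iff,
      Set.mem_singleton_iff] at hx
    rcases hx with rfl | rfl | rfl
    · exact Or.inl hu
    · exact Or.inl hv
    · exact Or.inr rfl
  · refine ⟨AffineSubspace.mk' p (Submodule.span ℝ {u - p}), ?_, ?_⟩
    · rw [AffineSubspace.direction_mk']
      exact finrank_span_singleton (sub_ne_zero.2 hup)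
    · intro x hx
      simp only [Finset.coe_insert, Finset.coe_singleton, Set.mem_insert_iff,
        Set.mem_singleton_iff] at hx
      rw [SetLike.mem_coe, AffineSubspace.mem_mk', vsub_eq_sub, Submodule.mem_span_singleton]
      rcases hx with rfl | rfl | rfl
      · exact ⟨1, by simp⟩
      · simp only [D, Pi.sub_apply] at h
        by_cases h0 : u 0 - p 0 = 0
        · have h1 : u 1 - p 1 ≠ 0 := by
            intro h1
            apply hup
            funext i
            fin_cases i
            · exact sub_eq_zero.1 h0
            · exact sub_eq_zero.1 h1
          rw [h0] at h
          have h2 : x 0 - p 0 = 0 := by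
            have : (u 1 - p 1) * (x 0 - p 0) = 0 := by linarith
            exact (mul_eq_zero.1 this).resolve_left h1
          refine ⟨(x 1 - p 1) / (u 1 - p 1), ?_⟩
          funext i
          fin_cases i
          · simp [h0, h2]
          · simp [h1]
        · refine ⟨(x 0 - p 0) / (u 0 - p 0), ?_⟩
          funext i
          fin_cases i
          · simp [h0]
          · simp
            field_simp
            linarith
      · exact ⟨0, by simp⟩

lemma exists_q (p : Fin 2 → ℝ) (X : Finset (Fin 2 → ℝ)) (hpX : p ∉ X) :
    ∃ q, ∀ u ∈ X, D q (u - p) ≠ 0 := by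
  obtain ⟨t, ht⟩ := Infinite.exists_notMem_finset
    (X.image fun u => (u 1 - p 1) / (u 0 - p 0))
  by_contra hcon
  push Not at hcon
  -- first try `(1, t)`
  obtain ⟨u, hu, h⟩ := hcon ![1, t]
  simp only [D, Pi.sub_apply, Matrix.cons_val_zero, Matrix.cons_val_one, one_mul] at h
  by_cases h0 : u 0 - p 0 = 0
  · rw [h0] at h
    apply hpX
    have : u = p := by
      funext i
      fin_cases i
      · exact sub_eq_zero.1 h0
      · simp at h; exact sub_eq_zero.1 h
    exact this ▸ hu
  · apply ht
    rw [Finset.mem_image]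
    refine ⟨u, hu, ?_⟩
    rw [div_eq_iff h0]
    linarith

end Birch

/-- For `d = 2` and `k ≥ 6`: if `X` is a set of `3k` points in `ℝ²` partitioned into three
color classes of `k` points each, with `X ∪ {p}` in general position, and `cBP k X > 0`,
then `cBP k X ≥ 8 · 3^(k - 6)`. -/
theorem cBP_lower_bound_plane (k : ℕ) (hk : 6 ≤ k)
    (p : Fin 2 → ℝ) (X : Finset (Fin 2 → ℝ)) (C : Fin 3 → Finset (Fin 2 → ℝ))
    (hXcard : X.card = 3 * k)
    (hccard : ∀ i : Fin 3, (C i).card = k)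
    (hcdisj : ∀ i j : Fin 3, i ≠ j → Disjoint (C i) (C j))
    (hX : X = Finset.univ.biUnion C)
    (hpX : p ∉ X)
    (hgen : GenPos 2 (↑X ∪ {p}))
    (hpos : 0 < cBP 2 k p X C) :
    8 * 3 ^ (k - 6) ≤ cBP 2 k p X C := by
  classical
  let e : ∀ c : Fin 3, C c ≃ Fin k := fun c => (C c).equivFinOfCardEq (hccard c)
  let pt : Fin 3 → Fin k → (Fin 2 → ℝ) := fun c i => ((e c).symm i : Fin 2 → ℝ)
  have pt_mem : ∀ c i, pt c i ∈ C c := fun c i => ((e c).symm i).2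
  have pt_memX : ∀ c i, pt c i ∈ X := fun c i => by
    rw [hX, Finset.mem_biUnion]; exact ⟨c, Finset.mem_univ _, pt_mem c i⟩
  have pt_surj : ∀ c, ∀ v ∈ C c, ∃ i, pt c i = v := fun c v hv =>
    ⟨e c ⟨v, hv⟩, by simp [pt]⟩
  have pt_col : ∀ c c' i, pt c i ∈ C c' → c = c' := by
    intro c c' i h
    by_contra hne
    exact Finset.disjoint_left.1 (hcdisj c c' hne) (pt_mem c i) h
  have pt_inj : ∀ c c' i i', pt c i = pt c' i' → c = c' ∧ i = i' := by
    intro c c' i i' h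
    have hc : c = c' := pt_col c c' i (h ▸ pt_mem c' i')
    subst hc
    exact ⟨rfl, (e c).symm.injective (Subtype.ext h)⟩
  let K : Fin k → Fin k → Fin k → Prop := fun i j l =>
    p ∈ convexHull ℝ ({pt 0 i, pt 1 j, pt 2 l} : Set (Fin 2 → ℝ))
  have hD : ∀ c c' i i', c ≠ c' → Birch.D (pt c i - p) (pt c' i' - p) ≠ 0 := by
    intro c c' i i' hc
    exact Birch.D_ne hpX hgen (pt_memX c i) (pt_memX c' i') fun h => hc (pt_inj _ _ _ _ h).1
  have hK : Birch.Lin K := by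
    obtain ⟨q, hq⟩ := Birch.exists_q p X hpX
    refine ⟨fun i j => Birch.ind (Birch.Tri q (pt 0 i - p) (pt 1 j - p)),
      fun i j => Birch.ind (Birch.Tri q (pt 1 i - p) (pt 2 j - p)),
      fun i j => Birch.ind (Birch.Tri q (pt 2 i - p) (pt 0 j - p)), fun a b c => ?_⟩
    have h1 := hD 0 1 a b (by decide)
    have h2 := hD 1 2 b c (by decide)
    have h3 := hD 2 0 c a (by decide)
    exact (Birch.hull_iff p _ _ _ h1 h2 h3).trans (Birch.tri_lin q _ _ _ (hq _ (pt_memX 0 a))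
      (hq _ (pt_memX 1 b)) (hq _ (pt_memX 2 c)) h1 h2 h3)
  let S : Set (Finset (Finset (Fin 2 → ℝ))) := { P : Finset (Finset (Fin 2 → ℝ)) |
    P.card = k ∧
    (∀ B ∈ P, ∀ B' ∈ P, B ≠ B' → Disjoint B B') ∧
    P.biUnion id = X ∧
    ∀ B ∈ P, B.card = 2 + 1 ∧ (∀ i : Fin (2 + 1), (B ∩ C i).card = 1) ∧
      p ∈ convexHull ℝ (B : Set (Fin 2 → ℝ)) }
  have hS : cBP 2 k p X C = S.ncard := rfl
  have hSfin : S.Finite := by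
    refine Set.Finite.subset (Finset.finite_toSet (X.powerset.powerset)) ?_
    intro P hP
    rw [Finset.mem_coe, Finset.mem_powerset]
    intro B hB
    rw [Finset.mem_powerset, ← hP.2.2.1]
    exact Finset.subset_biUnion_of_mem id hB
  -- a solution exists
  have hsol : ∃ s, Birch.Sol K s := by
    rw [hS, Set.ncard_pos hSfin] at hpos
    obtain ⟨P, hP1, hP2, hP3, hP4⟩ := hpos
    have hB : ∀ i : Fin k, ∃ B ∈ P, pt 0 i ∈ B := by
      intro i
      have := pt_memX 0 i
      rw [← hP3, Finset.mem_biUnion] at this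
      exact this
    choose B hBP hB0 using hB
    have hpick : ∀ i c, ∃ j, pt c j ∈ B i := by
      intro i c
      obtain ⟨v, hv⟩ := Finset.card_eq_one.1 ((hP4 (B i) (hBP i)).2.1 c)
      have hv' : v ∈ B i ∩ C c := by rw [hv]; exact Finset.mem_singleton_self v
      rw [Finset.mem_inter] at hv'
      obtain ⟨j, hj⟩ := pt_surj c v hv'.2
      exact ⟨j, hj ▸ hv'.1⟩
    choose f hf using hpick
    have huniq : ∀ i c j j', pt c j ∈ B i → pt c j' ∈ B i → j = j' := by
      intro i c j j' h h'
      have := Finset.card_le_one.1 ((hP4 (B i) (hBP i)).2.1 c).le (pt c j)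
        (Finset.mem_inter.2 ⟨h, pt_mem c j⟩) (pt c j') (Finset.mem_inter.2 ⟨h', pt_mem c j'⟩)
      exact (pt_inj _ _ _ _ this).2
    have hfinj : ∀ c, Function.Injective fun i => f i c := by
      intro c i i' h
      simp only at h
      have hBB : B i = B i' := by
        by_contra hne
        exact Finset.disjoint_left.1 (hP2 _ (hBP i) _ (hBP i') hne) (hf i c) (h ▸ hf i' c)
      exact huniq i 0 i i' (hB0 i) (hBB ▸ hB0 i')
    refine ⟨fun i => (f i 1, f i 2), hfinj 1, hfinj 2, fun i => ?_⟩
    have hBi : B i = {pt 0 i, pt 1 (f i 1), pt 2 (f i 2)} := by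
      symm
      apply Finset.eq_of_subset_of_card_le
      · intro v hv
        simp only [Finset.mem_insert, Finset.mem_singleton] at hv
        rcases hv with rfl | rfl | rfl
        · exact hB0 i
        · exact hf i 1
        · exact hf i 2
      · rw [(hP4 (B i) (hBP i)).1]
        refine (Finset.card_eq_three.2 ⟨_, _, _, ?_, ?_, ?_, rfl⟩).ge
        · exact fun h => absurd (pt_inj _ _ _ _ h).1 (by decide)
        · exact fun h => absurd (pt_inj _ _ _ _ h).1 (by decide)
        · exact fun h => absurd (pt_inj _ _ _ _ h).1 (by decide)
    have := (hP4 (B i) (hBP i)).2.2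
    rw [hBi] at this
    simpa [K] using this
  obtain ⟨s₀, hs₀⟩ := hsol
  refine (Birch.main_abs hk hK s₀ hs₀).trans ?_
  let idx : (Fin k → Fin k × Fin k) → Fin k → Fin 3 → Fin k :=
    fun s i => ![i, (s i).1, (s i).2]
  let block : (Fin k → Fin k × Fin k) → Fin k → Finset (Fin 2 → ℝ) :=
    fun s i => Finset.univ.image fun c : Fin 3 => pt c (idx s i c)
  have mem_block : ∀ s i c j, pt c j ∈ block s i ↔ j = idx s i c := by
    intro s i c j
    simp only [block, Finset.mem_image, Finset.mem_univ, true_and]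
    constructor
    · rintro ⟨c', h⟩
      obtain ⟨rfl, h2⟩ := pt_inj _ _ _ _ h
      exact h2.symm
    · rintro rfl
      exact ⟨c, rfl⟩
  have block_inj : ∀ s t i i', block s i = block t i' → i = i' ∧ s i = t i := by
    intro s t i i' h
    have hc : ∀ c, idx s i c = idx t i' c := by
      intro c
      have : pt c (idx s i c) ∈ block s i := (mem_block s i c _).2 rfl
      rw [h] at this
      exact (mem_block t i' c _).1 this
    have h0 : i = i' := hc 0
    subst h0
    exact ⟨rfl, Prod.ext (hc 1) (hc 2)⟩
  have hidx : ∀ s, Birch.Sol K s → ∀ c, Function.Injective fun i => idx s i c := by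
    intro s hs c
    fin_cases c
    · exact fun i j h => h
    · exact hs.1
    · exact hs.2.1
  rw [hS, ← Set.ncard_coe_finset]
  refine Set.ncard_le_ncard_of_injOn (fun s => Finset.univ.image (block s)) ?_ ?_ hSfin
  · intro s hs
    have hs : Birch.Sol K s := by simpa using hs
    refine ⟨?_, ?_, ?_, ?_⟩
    · rw [Finset.card_image_of_injective _ (fun i j h => (block_inj s s i j h).1)]
      simp
    · intro B hB B' hB' hne
      obtain ⟨i, _, rfl⟩ := Finset.mem_image.1 hB
      obtain ⟨j, _, rfl⟩ := Finset.mem_image.1 hB'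
      rw [Finset.disjoint_left]
      intro v hv hv'
      obtain ⟨c, _, rfl⟩ := Finset.mem_image.1 hv
      have := hidx s hs c ((mem_block s j c _).1 hv')
      exact hne (by rw [this])
    · ext v
      simp only [Finset.mem_biUnion, Finset.mem_image, Finset.mem_univ, true_and, id]
      constructor
      · rintro ⟨B, ⟨i, rfl⟩, hv⟩
        obtain ⟨c, _, rfl⟩ := Finset.mem_image.1 hv
        exact pt_memX _ _
      · intro hv
        rw [hX, Finset.mem_biUnion] at hv
        obtain ⟨c, _, hv⟩ := hv
        obtain ⟨j, rfl⟩ := pt_surj c v hv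
        obtain ⟨i, hi⟩ := Finite.injective_iff_surjective.1 (hidx s hs c) j
        exact ⟨_, ⟨i, rfl⟩, (mem_block s i c j).2 hi.symm⟩
    · intro B hB
      obtain ⟨i, _, rfl⟩ := Finset.mem_image.1 hB
      refine ⟨?_, ?_, ?_⟩
      · rw [Finset.card_image_of_injective _ (fun c c' h => (pt_inj _ _ _ _ h).1)]
        simp
      · intro c
        rw [Finset.card_eq_one]
        refine ⟨pt c (idx s i c), ?_⟩
        ext v
        rw [Finset.mem_inter, Finset.mem_singleton]
        constructor
        · rintro ⟨hv, hv'⟩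
          obtain ⟨c', _, rfl⟩ := Finset.mem_image.1 hv
          rw [pt_col _ _ _ hv']
        · rintro rfl
          exact ⟨(mem_block s i c _).2 rfl, pt_mem _ _⟩
      · have h1 : ((block s i : Finset (Fin 2 → ℝ)) : Set (Fin 2 → ℝ)) =
            {pt 0 i, pt 1 (s i).1, pt 2 (s i).2} := by
          ext v
          simp only [block, Finset.coe_image, Finset.coe_univ, Set.image_univ, Set.mem_range,
            Set.mem_insert_iff, Set.mem_singleton_iff]
          constructor
          · rintro ⟨c, rfl⟩
            fin_cases c
            · exact Or.inl rfl
            · exact Or.inr (Or.inl rfl)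
            · exact Or.inr (Or.inr rfl)
          · rintro (rfl | rfl | rfl)
            · exact ⟨0, rfl⟩
            · exact ⟨1, rfl⟩
            · exact ⟨2, rfl⟩
        rw [h1]
        exact hs.2.2 i
  · intro s _ t _ h
    simp only at h
    funext i
    have : block s i ∈ Finset.univ.image (block s) :=
      Finset.mem_image_of_mem _ (Finset.mem_univ i)
    rw [h] at this
    obtain ⟨j, _, hj⟩ := Finset.mem_image.1 this
    have := block_inj t s j i hj
    obtain ⟨rfl, h2⟩ := this
    exact h2.symm
end

section
/- Let d ≥ 2, let p ∈ ℝ^d, and let k ≥ d+2. Let X be a set of k(d+1) points in ℝ^d partitioned into d+1 color classes C_0, C_1, …, C_d of exactly k points each, with X ∪ {p} in general position. If cBP_k(X) > 0, then cBP_k(X) ≥ 2^{k−d−1}. -/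
open scoped Classical

theorem algA {d : ℕ} (hd : 1 ≤ d) {J : Type*} [Fintype J] (hJ : d + 1 < Fintype.card J)
    (g : Fin (d+1) → (Fin (d+1) → J) → ZMod 2)
    (hg : ∀ i x y, (∀ l, l ≠ i → x l = y l) → g i x = g i y) :
    ∑ σ ∈ (Finset.univ : Finset (Fin (d+1) → Equiv.Perm J)).filter (fun σ => σ 0 = 1),
      ∏ j, ∑ i, g i (fun l => σ l j) = 0 := by
  simp_rw [Finset.prod_univ_sum]
  rw [Finset.sum_comm]
  apply Finset.sum_eq_zero
  intro φ _
  obtain ⟨a, b, hab, hφ⟩ := Fintype.exists_ne_map_eq_of_card_lt φ (by simpa using hJ)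
  set s : Equiv.Perm J := Equiv.swap a b with hs
  have hs1 : s ≠ 1 := fun h => hab (Equiv.swap_eq_one_iff.mp h)
  have hss : s * s = 1 := Equiv.swap_mul_self a b
  let F : (Fin (d+1) → Equiv.Perm J) → (Fin (d+1) → Equiv.Perm J) := fun σ l =>
    if (l = φ a ∧ φ a ≠ 0) ∨ (l ≠ 0 ∧ φ a = 0) then σ l * s else σ l
  have key : ∀ σ : Fin (d+1) → Equiv.Perm J,
      ∏ j, g (φ j) (fun l => F σ l j) = ∏ j, g (φ j) (fun l => σ l j) := by
    intro σ
    by_cases h0 : φ a = 0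
    · rw [← Equiv.prod_comp s (fun j => g (φ j) (fun l => σ l j))]
      apply Finset.prod_congr rfl
      intro j _
      have hj : φ (s j) = φ j := by
        simp only [hs, Equiv.swap_apply_def]; split_ifs with h1 h2
        · rw [h1, hφ]
        · rw [h2, hφ]
        · rfl
      rw [hj]
      by_cases hj0 : φ j = 0
      · apply hg
        intro l hl
        rw [hj0] at hl
        simp [F, h0, hl]
      · have h1 : s j = j := by
          apply Equiv.swap_apply_of_ne_of_ne
          · rintro rfl; exact hj0 h0
          · rintro rfl; exact hj0 (hφ ▸ h0)
        rw [h1]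
        congr 1
        funext l
        simp only [F]; split_ifs <;> simp [h1]
    · apply Finset.prod_congr rfl
      intro j _
      by_cases hj : j = a ∨ j = b
      · have hj' : φ j = φ a := by rcases hj with rfl | rfl <;> simp [hφ]
        apply hg
        intro l hl
        rw [hj'] at hl
        simp [F, h0, hl]
      · push Not at hj
        have h1 : s j = j := Equiv.swap_apply_of_ne_of_ne hj.1 hj.2
        congr 1
        funext l
        simp only [F]; split_ifs <;> simp [h1]
  apply Finset.sum_involution (fun σ _ => F σ)
  · intro σ _
    rw [key]; exact CharTwo.add_self_eq_zero _
  · intro σ _ _ h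
    by_cases h0 : φ a = 0
    · have := congrFun h ⟨1, by omega⟩
      simp only [F, h0] at this
      rw [if_pos (by right; simp [Fin.ext_iff])] at this
      exact hs1 (by simpa using this)
    · have := congrFun h (φ a)
      simp only [F] at this
      rw [if_pos (by left; simp [h0])] at this
      exact hs1 (by simpa using this)
  · intro σ hσ
    simp only [Finset.mem_filter, Finset.mem_univ, true_and] at hσ ⊢
    simp only [F]
    rw [if_neg, hσ]
    rintro (⟨h, h'⟩ | h)
    · exact h' h.symm
    · exact h.1 rfl
  · intro σ _
    funext l
    simp only [F]
    split_ifs <;> simp [mul_assoc, hss]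

theorem algA' {d : ℕ} (hd : 1 ≤ d) {J : Type*} [Fintype J] (hJ : d + 1 < Fintype.card J)
    (g : Fin (d+1) → (Fin (d+1) → J) → ZMod 2)
    (hg : ∀ i x y, (∀ l, l ≠ i → x l = y l) → g i x = g i y)
    (h1 : ∀ j, ∑ i, g i (fun _ => j) = 1) :
    ∃ σ : Fin (d+1) → Equiv.Perm J, σ 0 = 1 ∧ σ ≠ 1 ∧ ∀ j, ∑ i, g i (fun l => σ l j) = 1 := by
  by_contra! hc
  have := algA hd hJ g hg
  rw [Finset.sum_eq_single_of_mem (1 : Fin (d+1) → Equiv.Perm J) (by simp)] at this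
  · simp [h1] at this
  · intro σ hσ hne
    obtain ⟨j, hj⟩ := hc σ (by simpa using hσ) hne
    apply Finset.prod_eq_zero (Finset.mem_univ j)
    revert hj
    generalize (∑ i, g i fun l => (σ l) j) = z
    revert z; decide

def BPart {α : Type*} (d : ℕ) (h : Finset α → Prop) (k : ℕ) (C : Fin (d+1) → Finset α) :
    Set (Finset (Finset α)) :=
  { P | P.card = k ∧
    (∀ B ∈ P, ∀ B' ∈ P, B ≠ B' → Disjoint B B') ∧
    P.biUnion id = Finset.univ.biUnion C ∧
    ∀ B ∈ P, B.card = d + 1 ∧ (∀ i : Fin (d + 1), (B ∩ C i).card = 1) ∧ h B }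

theorem BPart_finite {α : Type*} (d : ℕ) (h : Finset α → Prop) (k : ℕ) (C : Fin (d+1) → Finset α) :
    (BPart d h k C).Finite := by
  apply Set.Finite.subset (Finset.finite_toSet (Finset.univ.biUnion C).powerset.powerset)
  rintro P ⟨_, _, h3, _⟩
  simp only [Finset.coe_powerset, Set.mem_preimage, Set.mem_powerset_iff, Finset.mem_coe,
    Finset.mem_powerset]
  intro B hB
  simp only [Finset.coe_powerset, Set.mem_preimage, Set.mem_powerset_iff, Finset.mem_coe,
    Finset.mem_powerset, ← h3]
  exact Finset.subset_biUnion_of_mem id hB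

theorem BPart_erase {α : Type*} {d : ℕ} {h : Finset α → Prop} {k : ℕ} {C : Fin (d+1) → Finset α}
    {P : Finset (Finset α)} (hP : P ∈ BPart d h (k+1) C) {B : Finset α} (hB : B ∈ P) :
    P.erase B ∈ BPart d h k (fun i => C i \ B) := by
  obtain ⟨h1, h2, h3, h4⟩ := hP
  refine ⟨by rw [Finset.card_erase_of_mem hB, h1]; rfl, ?_, ?_, ?_⟩
  · intro D hD D' hD'
    exact h2 D (Finset.mem_of_mem_erase hD) D' (Finset.mem_of_mem_erase hD')
  · ext x
    have hx := Finset.ext_iff.mp h3 x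
    simp only [Finset.mem_biUnion, Finset.mem_univ, true_and, id, Finset.mem_erase,
      Finset.mem_sdiff] at hx ⊢
    constructor
    · rintro ⟨D, ⟨hne, hD⟩, hxD⟩
      obtain ⟨i, hi⟩ := hx.mp ⟨D, hD, hxD⟩
      exact ⟨i, hi, Finset.disjoint_left.mp (h2 D hD B hB hne) hxD⟩
    · rintro ⟨i, hi, hxB⟩
      obtain ⟨D, hD, hxD⟩ := hx.mpr ⟨i, hi⟩
      exact ⟨D, ⟨by rintro rfl; exact hxB hxD, hD⟩, hxD⟩
  · intro D hD
    have hD' := Finset.mem_of_mem_erase hD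
    obtain ⟨a, b, c⟩ := h4 D hD'
    refine ⟨a, fun i => ?_, c⟩
    refine Eq.trans (congrArg Finset.card ?_) (b i)
    ext x
    have : x ∈ D → x ∉ B := fun hx =>
      Finset.disjoint_left.mp (h2 D hD' B hB (Finset.ne_of_mem_erase hD)) hx
    simp only [Finset.mem_inter, Finset.mem_sdiff]
    tauto

theorem BPart_insert {α : Type*} {d : ℕ} {h : Finset α → Prop} {k : ℕ} {C : Fin (d+1) → Finset α}
    {B : Finset α} (hBc : B.card = d + 1) (hBi : ∀ i, (B ∩ C i).card = 1) (hBh : h B)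
    (hBC : B ⊆ Finset.univ.biUnion C)
    {P : Finset (Finset α)} (hP : P ∈ BPart d h k (fun i => C i \ B)) :
    B ∉ P ∧ insert B P ∈ BPart d h (k+1) C := by
  obtain ⟨h1, h2, h3, h4⟩ := hP
  have hdis : ∀ D ∈ P, Disjoint D B := by
    intro D hD
    have : D ⊆ _ := Finset.subset_biUnion_of_mem id hD
    rw [h3] at this
    rw [Finset.disjoint_left]
    intro x hx
    have := this hx
    simp only [Finset.mem_biUnion, Finset.mem_univ, true_and, Finset.mem_sdiff] at this
    exact this.choose_spec.2
  have hBP : B ∉ P := by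
    intro hB
    have := hdis B hB
    simp only [disjoint_self, Finset.bot_eq_empty] at this
    simp [this] at hBc
  refine ⟨hBP, by rw [Finset.card_insert_of_notMem hBP, h1], ?_, ?_, ?_⟩
  · intro D hD D' hD' hne
    rcases Finset.mem_insert.mp hD with e1 | e1 <;> rcases Finset.mem_insert.mp hD' with e2 | e2
    · exact absurd (e1.trans e2.symm) hne
    · rw [e1]; exact (hdis _ e2).symm
    · rw [e2]; exact hdis _ e1
    · exact h2 D e1 D' e2 hne
  · rw [Finset.biUnion_insert, h3]
    ext x
    have := @hBC x
    simp only [Finset.mem_union, Finset.mem_biUnion, Finset.mem_univ, true_and,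
      Finset.mem_sdiff, id] at this ⊢
    constructor
    · rintro (h | ⟨i, h, _⟩)
      · exact this h
      · exact ⟨i, h⟩
    · rintro ⟨i, hi⟩
      by_cases hx : x ∈ B
      · exact Or.inl hx
      · exact Or.inr ⟨i, hi, hx⟩
  · intro D hD
    rcases Finset.mem_insert.mp hD with rfl | hD
    · exact ⟨hBc, hBi, hBh⟩
    · obtain ⟨a, b, c⟩ := h4 D hD
      refine ⟨a, fun i => ?_, c⟩
      refine Eq.trans (congrArg Finset.card ?_) (b i)
      ext x
      have : x ∈ D → x ∉ B := fun hx => Finset.disjoint_left.mp (hdis D hD) hx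
      simp only [Finset.mem_inter, Finset.mem_sdiff]
      tauto

theorem BPart_second {α : Type*} {d : ℕ} (hd : 1 ≤ d) {h : Finset α → Prop} {k : ℕ}
    {C : Fin (d+1) → Finset α} (hk : d + 1 < k)
    (hC : ∀ i, (C i).card = k) (hdis : ∀ i j, i ≠ j → Disjoint (C i) (C j))
    (g : Fin (d+1) → (Fin (d+1) → α) → ZMod 2)
    (hg : ∀ i x y, (∀ l, l ≠ i → x l = y l) → g i x = g i y)
    (hh : ∀ x : Fin (d+1) → α, (∀ i, x i ∈ C i) →
      (h (Finset.univ.image x) ↔ ∑ i, g i x = 1))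
    {P : Finset (Finset α)} (hP : P ∈ BPart d h k C) :
    ∃ B ∈ P, ∃ Q ∈ BPart d h k C, ∃ B' ∈ Q, B ≠ B' ∧ ¬ Disjoint B B' := by
  obtain ⟨h1, h2, h3, h4⟩ := hP
  have hex : ∀ (i : Fin (d+1)) (B : P), ∃ x, (B : Finset α) ∩ C i = {x} := fun i B =>
    Finset.card_eq_one.mp ((h4 B B.2).2.1 i)
  choose e he using hex
  have heB : ∀ i (B : P), e i B ∈ (B : Finset α) := fun i B =>
    (Finset.mem_inter.mp (by rw [he i B]; simp : e i B ∈ (B : Finset α) ∩ C i)).1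
  have heC : ∀ i (B : P), e i B ∈ C i := fun i B =>
    (Finset.mem_inter.mp (by rw [he i B]; simp : e i B ∈ (B : Finset α) ∩ C i)).2
  have hcol : ∀ i i' x, x ∈ C i → x ∈ C i' → i = i' := by
    intro i i' x hx hx'
    by_contra hne
    exact Finset.disjoint_left.mp (hdis i i' hne) hx hx'
  have hinj : ∀ i i' B B', e i B = e i' B' → i = i' ∧ B = B' := by
    intro i i' B B' hee
    refine ⟨hcol i i' _ (heC i B) (hee ▸ heC i' B'), ?_⟩
    by_contra hne
    exact Finset.disjoint_left.mp (h2 B B.2 B' B'.2 (fun h => hne (Subtype.ext h))) (heB i B)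
      (hee ▸ heB i' B')
  have hsurj : ∀ i, ∀ x ∈ C i, ∃ B, e i B = x := by
    intro i x hx
    have : x ∈ P.biUnion id := by rw [h3]; simp only [Finset.mem_biUnion]; exact ⟨i, by simp, hx⟩
    obtain ⟨B, hB, hxB⟩ := Finset.mem_biUnion.mp this
    refine ⟨⟨B, hB⟩, ?_⟩
    have : x ∈ B ∩ C i := Finset.mem_inter.mpr ⟨hxB, hx⟩
    rw [he i ⟨B, hB⟩] at this
    exact (Finset.mem_singleton.mp this).symm
  -- a block from indices
  have himg : ∀ B : P, Finset.univ.image (fun l => e l B) = B := by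
    intro B
    apply Finset.eq_of_subset_of_card_le
    · intro x hx
      obtain ⟨l, _, rfl⟩ := Finset.mem_image.mp hx
      exact heB l B
    · rw [(h4 B B.2).1, Finset.card_image_of_injective _ (fun l l' hl => (hinj _ _ _ _ hl).1)]
      simp
  obtain ⟨σ, hσ0, hσ1, hσ⟩ := algA' hd (J := P) (by simpa [h1] using hk)
    (fun i x => g i (fun l => e l (x l)))
    (fun i x y hxy => hg i _ _ (fun l hl => by rw [hxy l hl]))
    (fun B => (hh _ (fun i => heC i B)).mp (by rw [himg]; exact (h4 B B.2).2.2))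
  let b : P → Finset α := fun B => Finset.univ.image (fun l => e l (σ l B))
  have hmem : ∀ B l D, e l D ∈ b B ↔ D = σ l B := by
    intro B l D
    simp only [b, Finset.mem_image, Finset.mem_univ, true_and]
    constructor
    · rintro ⟨l', hl⟩
      obtain ⟨rfl, h⟩ := hinj _ _ _ _ hl
      exact h.symm
    · rintro rfl; exact ⟨l, rfl⟩
  have hbinj : Function.Injective b := by
    intro B B' hBB
    have := (hmem B 0 (σ 0 B)).mpr rfl
    rw [hBB, hmem] at this
    exact (σ 0).injective this
  have hform : ∀ B, ∀ x ∈ b B, ∃ l, e l (σ l B) = x := by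
    intro B x hx
    obtain ⟨l, _, h⟩ := Finset.mem_image.mp hx
    exact ⟨l, h⟩
  have hQ : Finset.univ.image b ∈ BPart d h k C := by
    refine ⟨?_, ?_, ?_, ?_⟩
    · rw [Finset.card_image_of_injective _ hbinj]; simpa using h1
    · intro D hD D' hD' hne
      obtain ⟨B, _, rfl⟩ := Finset.mem_image.mp hD
      obtain ⟨B', _, rfl⟩ := Finset.mem_image.mp hD'
      rw [Finset.disjoint_left]
      intro x hx hx'
      obtain ⟨l, rfl⟩ := hform _ _ hx
      rw [hmem] at hx'
      exact hne (by rw [(σ l).injective hx'])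
    · ext x
      simp only [Finset.mem_biUnion, Finset.mem_image, Finset.mem_univ, true_and, id]
      constructor
      · rintro ⟨_, ⟨B, rfl⟩, hx⟩
        obtain ⟨l, rfl⟩ := hform _ _ hx
        exact ⟨l, heC _ _⟩
      · rintro ⟨i, hi⟩
        obtain ⟨B, rfl⟩ := hsurj i x hi
        exact ⟨_, ⟨(σ i).symm B, rfl⟩, by rw [hmem]; simp⟩
    · intro D hD
      obtain ⟨B, _, rfl⟩ := Finset.mem_image.mp hD
      refine ⟨?_, ?_, ?_⟩
      · simp only [b]
        rw [Finset.card_image_of_injective _ (fun l l' hl => (hinj _ _ _ _ hl).1)]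
        simp
      · intro i
        rw [Finset.card_eq_one]
        refine ⟨e i (σ i B), ?_⟩
        ext x
        simp only [Finset.mem_inter, Finset.mem_singleton]
        constructor
        · rintro ⟨hx, hxi⟩
          obtain ⟨l, rfl⟩ := hform _ _ hx
          rw [hcol _ _ _ (heC _ _) hxi]
        · rintro rfl
          exact ⟨(hmem _ _ _).mpr rfl, heC _ _⟩
      · exact (hh _ (fun i => heC _ _)).mpr (hσ B)
  obtain ⟨l, B, hlB⟩ : ∃ l B, σ l B ≠ B := by
    by_contra! hc
    exact hσ1 (funext fun l => Equiv.ext (hc l))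
  refine ⟨B, B.2, _, hQ, b B, Finset.mem_image_of_mem _ (Finset.mem_univ _), ?_, ?_⟩
  · intro heq
    have := heB l B
    rw [heq, hmem] at this
    exact hlB this.symm
  · rw [Finset.not_disjoint_iff]
    exact ⟨e 0 B, heB 0 B, (hmem _ _ _).mpr (by rw [hσ0]; rfl)⟩

theorem BPart_bound {α : Type*} {d : ℕ} (hd : 1 ≤ d) {h : Finset α → Prop}
    (g : Fin (d+1) → (Fin (d+1) → α) → ZMod 2)
    (hg : ∀ i x y, (∀ l, l ≠ i → x l = y l) → g i x = g i y) (m : ℕ) :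
    ∀ (C : Fin (d+1) → Finset α)
    (_ : ∀ i, (C i).card = d + 1 + m) (_ : ∀ i j, i ≠ j → Disjoint (C i) (C j))
    (_ : ∀ x : Fin (d+1) → α, (∀ i, x i ∈ C i) →
      (h (Finset.univ.image x) ↔ ∑ i, g i x = 1))
    (_ : (BPart d h (d + 1 + m) C).Nonempty), 2 ^ m ≤ (BPart d h (d + 1 + m) C).ncard := by
  induction m with
  | zero =>
    intro C _ _ _ hne
    have := (Set.ncard_pos (BPart_finite _ _ _ _)).mpr hne
    simpa [Nat.one_le_iff_ne_zero, Nat.pos_iff_ne_zero] using this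
  | succ m ih =>
    intro C hC hdis hh ⟨P, hP⟩
    obtain ⟨B, hB, Q, hQ, B', hB', hne, hnd⟩ :=
      BPart_second hd (by omega) hC hdis g hg hh hP
    have main : ∀ P ∈ BPart d h (d + 1 + (m+1)) C, ∀ B ∈ P,
        2 ^ m ≤ (BPart d h (d + 1 + (m+1)) C ∩ {R | B ∈ R}).ncard := by
      intro P hP B hB
      have hP' := hP
      obtain ⟨h1, h2, h3, h4⟩ := hP'
      obtain ⟨ha, hb, hc⟩ := h4 B hB
      have hBC : B ⊆ Finset.univ.biUnion C := by
        rw [← h3]; exact Finset.subset_biUnion_of_mem id hB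
      refine (ih (fun i => C i \ B) ?_ ?_ ?_ ⟨_, BPart_erase (k := d + 1 + m) hP hB⟩).trans ?_
      · intro i
        have := Finset.card_sdiff_add_card_inter (C i) B
        rw [Finset.inter_comm, hb i, hC i] at this
        omega
      · intro i j hij
        exact (hdis i j hij).mono Finset.sdiff_subset Finset.sdiff_subset
      · intro x hx
        exact hh x (fun i => Finset.sdiff_subset (hx i))
      · apply Set.ncard_le_ncard_of_injOn (fun R => insert B R) (ht := (BPart_finite _ _ _ _).inter_of_left _)
        · intro R hR
          have := BPart_insert ha hb hc hBC hR
          exact ⟨this.2, Finset.mem_insert_self _ _⟩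
        · intro R hR R' hR' heq
          have h1 := (BPart_insert ha hb hc hBC hR).1
          have h2 := (BPart_insert ha hb hc hBC hR').1
          have := congrArg (fun S => Finset.erase S B) heq
          simpa [Finset.erase_insert h1, Finset.erase_insert h2] using this
    have e1 := main P hP B hB
    have e2 := main Q hQ B' hB'
    rw [pow_succ, mul_two]
    refine (add_le_add e1 e2).trans ?_
    rw [← Set.ncard_union_eq ?_ ((BPart_finite _ _ _ _).inter_of_left _)
      ((BPart_finite _ _ _ _).inter_of_left _)]
    · apply Set.ncard_le_ncard _ (BPart_finite _ _ _ _)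
      rintro R (h | h) <;> exact h.1
    · rw [Set.disjoint_left]
      rintro R ⟨hR, hBR⟩ ⟨_, hBR'⟩
      exact hnd (hR.2.1 B hBR B' hBR' hne)
theorem tttsign_pos {ι : Type*} [Fintype ι] [Nonempty ι] (lam t : ι → ℝ) (ht : Function.Injective t)
    (hl : ∀ i, 0 < lam i) :
    (Finset.univ.filter (fun i => ∀ j, 0 ≤ lam j * (t i - t j))).card = 1 := by
  obtain ⟨m, hm⟩ := Finite.exists_max t
  rw [Finset.card_eq_one]
  refine ⟨m, ?_⟩
  ext i
  simp only [Finset.mem_filter, Finset.mem_univ, true_and, Finset.mem_singleton]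
  constructor
  · intro h
    have := h m
    have h2 := nonneg_of_mul_nonneg_right this (hl m)
    exact ht (le_antisymm (hm i) (by linarith))
  · rintro rfl j
    exact mul_nonneg (hl j).le (by linarith [hm j])

theorem tttsign_aux {ι : Type*} [Fintype ι] (lam t : ι → ℝ) (ht : Function.Injective t)
    (hl : ∀ i, lam i ≠ 0) (hneg : ∃ i, lam i < 0) (i : ι) (hi : 0 < lam i)
    (hG : ∀ j, 0 ≤ lam j * (t i - t j)) :
    (Finset.univ.filter (fun i => ∀ j, 0 ≤ lam j * (t i - t j))).card = 2 := by
  obtain ⟨m, hm, hmin⟩ := Finset.exists_min_image (Finset.univ.filter (fun i => lam i < 0)) t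
    (by obtain ⟨i, hi⟩ := hneg; exact ⟨i, by simpa using hi⟩)
  simp only [Finset.mem_filter, Finset.mem_univ, true_and] at hm hmin
  have hle : ∀ j, 0 < lam j → t j ≤ t i := fun j hj => by
    have := nonneg_of_mul_nonneg_right (hG j) hj
    linarith
  have hge : ∀ j, lam j < 0 → t i ≤ t j := fun j hj => by
    have := hG j
    by_contra hc
    push Not at hc
    have := mul_neg_of_neg_of_pos hj (sub_pos.mpr hc)
    linarith
  rw [Finset.card_eq_two]
  refine ⟨i, m, by rintro rfl; linarith, ?_⟩
  ext a
  simp only [Finset.mem_filter, Finset.mem_univ, true_and, Finset.mem_insert, Finset.mem_singleton]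
  constructor
  · intro h
    rcases lt_or_gt_of_ne (hl a) with ha | ha
    · right
      apply ht
      apply le_antisymm _ (hmin a ha)
      by_contra hc
      push Not at hc
      have := mul_neg_of_neg_of_pos hm (sub_pos.mpr hc)
      linarith [h m]
    · left
      apply ht
      apply le_antisymm (hle a ha)
      have := nonneg_of_mul_nonneg_right (h i) hi
      linarith
  · rintro (rfl | rfl)
    · exact hG
    · intro j
      rcases lt_or_gt_of_ne (hl j) with hj | hj
      · exact mul_nonneg_of_nonpos_of_nonpos hj.le (by linarith [hmin j hj])
      · exact mul_nonneg hj.le (by linarith [hle j hj, hge a hm])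

theorem tttsign_mixed {ι : Type*} [Fintype ι] (lam t : ι → ℝ) (ht : Function.Injective t)
    (hl : ∀ i, lam i ≠ 0) (hneg : ∃ i, lam i < 0) (hpos : ∃ i, 0 < lam i) :
    Even (Finset.univ.filter (fun i => ∀ j, 0 ≤ lam j * (t i - t j))).card := by
  rcases Finset.eq_empty_or_nonempty (Finset.univ.filter (fun i => ∀ j, 0 ≤ lam j * (t i - t j)))
    with h | ⟨i, hi⟩
  · rw [h]; simp
  · simp only [Finset.mem_filter, Finset.mem_univ, true_and] at hi
    rcases lt_or_gt_of_ne (hl i) with h | h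
    · have := tttsign_aux (fun i => - lam i) (fun i => - t i) (neg_injective.comp ht)
        (fun i => neg_ne_zero.mpr (hl i)) (by obtain ⟨j, hj⟩ := hpos; exact ⟨j, by simpa using hj⟩)
        i (by simpa using h) (fun j => by have := hi j; linarith)
      have e : ∀ i j, 0 ≤ -lam j * (-t i - -t j) ↔ 0 ≤ lam j * (t i - t j) := by
        intro i j
        rw [show -lam j * (-t i - -t j) = lam j * (t i - t j) by ring]
      simp only [e] at this
      rw [this]; decide
    · rw [tttsign_aux lam t ht hl hneg i h hi]; decide

/-- `u` lies in the cone spanned by the `x l`, `l ≠ i`. -/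
def inCone {ι V : Type*} [Fintype ι] [AddCommGroup V] [Module ℝ V] (u : V) (i : ι) (x : ι → V) :
    Prop := ∃ c : ι → ℝ, c i = 0 ∧ (∀ l, 0 ≤ c l) ∧ ∑ l, c l • x l = u

theorem inCone_congr {ι V : Type*} [Fintype ι] [AddCommGroup V] [Module ℝ V] (u : V) (i : ι)
    (x y : ι → V) (h : ∀ l, l ≠ i → x l = y l) : inCone u i x ↔ inCone u i y := by
  unfold inCone
  apply exists_congr
  intro c
  apply and_congr_right
  intro hc
  rw [Finset.sum_congr rfl (g := fun l => c l • y l)]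
  intro l _
  by_cases hl : l = i
  · subst hl; simp [hc]
  · rw [h l hl]

theorem cone_parity {ι V : Type*} [Fintype ι] [Nonempty ι] [AddCommGroup V] [Module ℝ V] (u : V)
    (x : ι → V) (lam0 : ι → ℝ) (h0 : ∑ l, lam0 l • x l = 0) (hne : lam0 ≠ 0)
    (hLI : ∀ c : ι → ℝ, ∀ i, c i = 0 → ∑ l, c l • x l = 0 → c = 0)
    (a : ι → ℝ) (ha : ∑ l, a l • x l = u)
    (hgen : ∀ c : ι → ℝ, ∀ i j, i ≠ j → c i = 0 → c j = 0 → ∑ l, c l • x l ≠ u) :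
    (∃ w : ι → ℝ, (∀ i, 0 ≤ w i) ∧ ∑ i, w i = 1 ∧ ∑ i, w i • x i = 0) ↔
      ∑ i, (if inCone u i x then 1 else 0 : ZMod 2) = 1 := by
  have comb : ∀ (lam : ι → ℝ) (s : ℝ), ∑ l, lam l • x l = 0 →
      ∑ l, (a l + s * lam l) • x l = u := by
    intro lam s h
    simp only [add_smul, mul_smul, Finset.sum_add_distrib, ← Finset.smul_sum, h, ha]
    simp
  have key : ∀ lam : ι → ℝ, ∑ l, lam l • x l = 0 → (∀ i, lam i ≠ 0) → ∃ t : ι → ℝ,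
      Function.Injective t ∧ ∀ i, inCone u i x ↔ ∀ j, 0 ≤ lam j * (t i - t j) := by
    intro lam hl hl0
    refine ⟨fun i => - a i / lam i, ?_, ?_⟩
    · intro i j hij
      by_contra hne
      apply hgen (fun l => a l + (- a i / lam i) * lam l) i j hne
      · have := hl0 i; field_simp; ring
      · simp only at hij ⊢
        rw [hij]
        have := hl0 j; field_simp; ring
      · exact comb lam _ hl
    · intro i
      have e : ∀ j, lam j * (- a i / lam i - - a j / lam j) = a j + (- a i / lam i) * lam j := by
        intro j
        have := hl0 i
        have := hl0 j
        field_simp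
        ring
      simp only [e]
      constructor
      · rintro ⟨c, hci, hc0, hcu⟩
        have := hLI (fun l => c l - (a l + (- a i / lam i) * lam l)) i
          (by have := hl0 i; simp only [hci]; field_simp; ring)
          (by simp only [sub_smul, Finset.sum_sub_distrib, hcu, comb lam _ hl, sub_self])
        intro j
        have hj := congrFun this j
        simp only [Pi.zero_apply] at hj
        linarith [hc0 j]
      · intro h
        refine ⟨_, ?_, h, comb lam _ hl⟩
        have := hl0 i
        field_simp; ring
  have nz : ∀ lam : ι → ℝ, ∑ l, lam l • x l = 0 → lam ≠ 0 → ∀ i, lam i ≠ 0 :=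
    fun lam h h' i hi => h' (hLI lam i hi h)
  rw [Finset.sum_boole]
  constructor
  · rintro ⟨w, hw, hw1, hwx⟩
    have hwn := nz w hwx (by rintro rfl; simp at hw1)
    obtain ⟨t, ht, hit⟩ := key w hwx hwn
    simp only [hit]
    rw [tttsign_pos w t ht (fun i => lt_of_le_of_ne (hw i) (hwn i).symm)]
    simp
  · intro h
    by_contra hc
    have hwn := nz lam0 h0 hne
    obtain ⟨t, ht, hit⟩ := key lam0 h0 hwn
    simp only [hit] at h
    have norm : ∀ lam : ι → ℝ, ∑ l, lam l • x l = 0 → lam ≠ 0 → ¬ ∀ i, 0 ≤ lam i := by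
      intro lam hl hl0 hp
      have hs : 0 < ∑ i, lam i := by
        apply Finset.sum_pos (fun i _ => lt_of_le_of_ne (hp i) (nz lam hl hl0 i).symm)
        exact Finset.univ_nonempty
      apply hc
      refine ⟨fun i => (∑ i, lam i)⁻¹ * lam i, fun i => mul_nonneg (by positivity) (hp i), ?_, ?_⟩
      · rw [← Finset.mul_sum]; field_simp
      · simp only [mul_smul, ← Finset.smul_sum, hl, smul_zero]
    have hev := tttsign_mixed lam0 t ht hwn (by simpa using norm lam0 h0 hne)
      (by simpa using norm (-lam0) (by simp [h0]) (by simpa using hne))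
    rw [(ZMod.natCast_eq_zero_iff_even).mpr hev] at h
    exact absurd h (by decide)

theorem genpos_span {d : ℕ} (hd : 1 ≤ d) {p : Fin d → ℝ} {X : Finset (Fin d → ℝ)}
    (hpX : p ∉ X) (hgen : GenPos d (↑X ∪ {p})) (S : Finset (Fin d → ℝ)) (hS : S ⊆ X)
    (hc : S.card = d) (W : Submodule ℝ (Fin d → ℝ)) (hW : ∀ y ∈ S, y - p ∈ W) : W = ⊤ := by
  by_contra hne
  obtain ⟨f, hf, hWf⟩ := Submodule.exists_le_ker_of_lt_top W (lt_top_iff_ne_top.mpr hne)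
  have hr := Module.Dual.finrank_ker_add_one_of_ne_zero hf
  simp only [Module.finrank_fintype_fun_eq_card, Fintype.card_fin] at hr
  apply hgen (d - 1) (by omega) (insert p S)
  · intro y hy
    rcases Finset.mem_insert.mp (Finset.mem_coe.mp hy) with rfl | hy
    · right; rfl
    · left; exact hS hy
  · rw [Finset.card_insert_of_notMem (fun h => hpX (hS h)), hc]; omega
  · refine ⟨AffineSubspace.mk' p (LinearMap.ker f), ?_, ?_⟩
    · rw [AffineSubspace.direction_mk']; omega
    · intro y hy
      rw [SetLike.mem_coe, AffineSubspace.mem_mk', vsub_eq_sub]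
      rcases Finset.mem_insert.mp (Finset.mem_coe.mp hy) with rfl | hy
      · simp
      · exact hWf (hW y hy)

theorem exists_generic {d : ℕ} (hd : 1 ≤ d) (p : Fin d → ℝ) (X : Finset (Fin d → ℝ)) :
    ∃ u : Fin d → ℝ, ∀ T ⊆ X, T.card ≤ d - 1 →
      u ∉ Submodule.span ℝ ((T.image (fun y => y - p) : Finset _) : Set (Fin d → ℝ)) := by
  let s := X.powerset.filter (fun T => T.card ≤ d - 1)
  have := Subspace.biUnion_ne_univ_of_top_notMem (k := ℝ) (E := Fin d → ℝ)
    (s := s.image (fun T => Submodule.span ℝ ((T.image (fun y => y - p) : Finset _) : Set (Fin d → ℝ))))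
    (by
      intro h
      obtain ⟨T, hT, hTt⟩ := Finset.mem_image.mp h
      have hT' := (Finset.mem_filter.mp hT).2
      have h1 := finrank_span_finset_le_card (R := ℝ) (T.image (fun y => y - p))
      have h2 : (T.image (fun y => y - p)).card ≤ T.card := Finset.card_image_le
      rw [Set.finrank, hTt] at h1
      simp at h1
      omega)
  obtain ⟨u, hu⟩ := (Set.ne_univ_iff_exists_notMem _).mp this
  refine ⟨u, fun T hT hc hm => hu ?_⟩
  simp only [Set.mem_iUnion]
  exact ⟨_, Finset.mem_image_of_mem _ (Finset.mem_filter.mpr ⟨Finset.mem_powerset.mpr hT, hc⟩), hm⟩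

theorem hull_iff {d : ℕ} (hd : 1 ≤ d) {p : Fin d → ℝ} {X : Finset (Fin d → ℝ)}
    (hpX : p ∉ X) (hgen : GenPos d (↑X ∪ {p})) (u : Fin d → ℝ)
    (hu : ∀ T ⊆ X, T.card ≤ d - 1 →
      u ∉ Submodule.span ℝ ((T.image (fun y => y - p) : Finset _) : Set (Fin d → ℝ)))
    (x : Fin (d+1) → (Fin d → ℝ)) (hx : ∀ i, x i ∈ X) (hinj : Function.Injective x) :
    p ∈ convexHull ℝ ((Finset.univ.image x : Finset _) : Set (Fin d → ℝ)) ↔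
      ∑ i, (if inCone u i (fun l => x l - p) then 1 else 0 : ZMod 2) = 1 := by
  have hsp : ∀ i : Fin (d+1), Submodule.span ℝ
      (Set.range (fun l : {l // l ≠ i} => x l - p)) = ⊤ := by
    intro i
    apply genpos_span hd hpX hgen ((Finset.univ.erase i).image x)
    · intro y hy
      obtain ⟨l, _, rfl⟩ := Finset.mem_image.mp hy
      exact hx l
    · rw [Finset.card_image_of_injective _ hinj]; simp
    · intro y hy
      obtain ⟨l, hl, rfl⟩ := Finset.mem_image.mp hy
      exact Submodule.subset_span ⟨⟨l, (Finset.mem_erase.mp hl).1⟩, rfl⟩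
  obtain ⟨lam0, h0, hne⟩ : ∃ c : Fin (d+1) → ℝ, ∑ l, c l • (x l - p) = 0 ∧ c ≠ 0 := by
    have : ¬ LinearIndependent ℝ (fun l => x l - p) := by
      intro h
      have := h.fintype_card_le_finrank
      simp at this
    obtain ⟨c, hc, i, hi⟩ := Fintype.not_linearIndependent_iff.mp this
    exact ⟨c, hc, fun h => hi (by rw [h]; rfl)⟩
  obtain ⟨a, ha⟩ : ∃ a : Fin (d+1) → ℝ, ∑ l, a l • (x l - p) = u := by
    have : u ∈ Submodule.span ℝ (Set.range (fun l => x l - p)) := by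
      have h1 : u ∈ (⊤ : Submodule ℝ (Fin d → ℝ)) := trivial
      rw [← hsp 0] at h1
      refine Submodule.span_mono ?_ h1
      rintro _ ⟨l, rfl⟩
      exact ⟨l, rfl⟩
    exact (Submodule.mem_span_range_iff_exists_fun ℝ).mp this
  rw [← cone_parity u (fun l => x l - p) lam0 h0 hne ?_ a ha ?_]
  · rw [Finset.coe_image, Finset.coe_univ, Set.image_univ]
    constructor
    · intro h
      rw [convexHull_range_eq_exists_affineCombination] at h
      obtain ⟨s, w, hw, hw1, hwp⟩ := h
      rw [s.affineCombination_eq_linear_combination _ _ hw1] at hwp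
      refine ⟨fun i => if i ∈ s then w i else 0, fun i => ?_, ?_, ?_⟩
      · dsimp only; split_ifs with h
        · exact hw i h
        · exact le_rfl
      · simpa using hw1
      · simp only [ite_smul, zero_smul, Finset.sum_ite_mem, Finset.univ_inter, smul_sub,
          Finset.sum_sub_distrib, hwp, ← Finset.sum_smul, hw1, one_smul, sub_self]
    · rintro ⟨w, hw, hw1, hwx⟩
      simp only [smul_sub, Finset.sum_sub_distrib, ← Finset.sum_smul, hw1, one_smul] at hwx
      rw [← sub_eq_zero.mp hwx]
      exact (convex_convexHull ℝ _).sum_mem (fun i _ => hw i) hw1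
        (fun i _ => subset_convexHull ℝ _ ⟨i, rfl⟩)
  · intro c i hi hc
    have hLI : LinearIndependent ℝ (fun l : {l // l ≠ i} => x l - p) := by
      apply linearIndependent_of_top_le_span_of_card_eq_finrank (hsp i).ge
      simp
    have := Fintype.linearIndependent_iff.mp hLI (fun l => c l) (by
      rw [Fintype.sum_eq_add_sum_subtype_ne _ i, hi, zero_smul, zero_add] at hc
      exact hc)
    funext l
    by_cases hl : l = i
    · rw [hl, hi]; rfl
    · exact this ⟨l, hl⟩
  · intro c i j hij hi hj hcu
    apply hu (((Finset.univ.erase i).erase j).image x)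
    · intro y hy
      obtain ⟨l, _, rfl⟩ := Finset.mem_image.mp hy
      exact hx l
    · refine Finset.card_image_le.trans ?_
      rw [Finset.card_erase_of_mem (by simp [hij.symm]), Finset.card_erase_of_mem (by simp)]
      simp
    · rw [← hcu]
      apply Submodule.sum_mem
      intro l _
      by_cases h : l = i
      · rw [h, hi]; simp
      by_cases h' : l = j
      · rw [h', hj]; simp
      apply Submodule.smul_mem
      apply Submodule.subset_span
      rw [Finset.mem_coe]
      exact Finset.mem_image_of_mem _ (Finset.mem_image_of_mem _ (by simp [h, h']))
/-- For `d ≥ 2` and `k ≥ d + 2`: if `X` is a set of `k(d+1)` points in `ℝ^d` partitioned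
into `d + 1` color classes of exactly `k` points each, with `X ∪ {p}` in general position,
and `cBP k X > 0`, then `cBP k X ≥ 2^(k - d - 1)`. -/
theorem cBP_lower_bound (d k : ℕ) (hd : 2 ≤ d) (hk : d + 2 ≤ k)
    (p : Fin d → ℝ) (X : Finset (Fin d → ℝ)) (C : Fin (d + 1) → Finset (Fin d → ℝ))
    (hXcard : X.card = k * (d + 1))
    (hccard : ∀ i : Fin (d + 1), (C i).card = k)
    (hcdisj : ∀ i j : Fin (d + 1), i ≠ j → Disjoint (C i) (C j))
    (hX : X = Finset.univ.biUnion C)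
    (hpX : p ∉ X)
    (hgen : GenPos d (↑X ∪ {p}))
    (hpos : 0 < cBP d k p X C) :
    2 ^ (k - d - 1) ≤ cBP d k p X C := by
  obtain ⟨u, hu⟩ := exists_generic (by omega : 1 ≤ d) p X
  have hsub : ∀ i, C i ⊆ X := by
    intro i; rw [hX]; exact Finset.subset_biUnion_of_mem C (Finset.mem_univ i)
  have heq : cBP d k p X C =
      (BPart d (fun B => p ∈ convexHull ℝ (B : Set (Fin d → ℝ))) k C).ncard := by
    rw [hX]; unfold cBP BPart; congr!
  obtain ⟨m, rfl⟩ : ∃ m, k = d + 1 + m := ⟨k - (d + 1), by omega⟩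
  have hm : d + 1 + m - d - 1 = m := by omega
  rw [heq] at hpos ⊢
  rw [hm]
  refine BPart_bound (by omega)
    (fun i x => if inCone u i (fun l => x l - p) then 1 else 0) ?_ m C hccard hcdisj ?_
    (Set.nonempty_of_ncard_ne_zero hpos.ne')
  · intro i x y h
    have := inCone_congr u i (fun l => x l - p) (fun l => y l - p) (fun l hl => by rw [h l hl])
    simp only [this]
  · intro x hx
    convert hull_iff (by omega) hpX hgen u hu x (fun i => hsub i (hx i)) ?_
    intro i j hij
    by_contra hne
    exact Finset.disjoint_left.mp (hcdisj i j hne) (hx i) (hij ▸ hx j)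
end
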